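/- arXiv:0908.3274 — 3 statements merged into one kernel-verified Lean document; each statement's English description precedes it below -/
import Mathlib

section
/- (CMC surfaces containing a line segment: converse.) Let J ⊆ ℝ be an open interval, x₀ ∈ J, H ≠ 0 real, and let f : Σ → su(2) be a smooth conformal immersion of constant mean curvature H on an open set Σ ⊆ ℂ containing J × {0}, such that f(x,0) = 2x·e₁ for all x ∈ J and ∂_y f(x₀,0) is a positive multiple of e₂. Then the conformal factor satisfies u(x,0) = 0 for all x ∈ J, and there exists a real analytic function θ₀ : J → ℝ with θ₀(x₀) = 0 such that ∂_y f(x,0) = 2(cos θ₀(x)·e₂ + sin θ₀(x)·e₃) for all x ∈ J, and the Hopf differential coefficient of f satisfies Q(x,0) = -i θ₀′(x) - 2H for all x ∈ J. -/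
open Matrix Complex

noncomputable section

attribute [local instance] Matrix.linftyOpNormedAddCommGroup Matrix.linftyOpNormedSpace
  Matrix.linftyOpNormedRing Matrix.linftyOpNormedAlgebra

/-- The space of 2×2 complex matrices. -/
abbrev M2 : Type := Matrix (Fin 2) (Fin 2) ℂ

/-- Basis vector `e₁` of su(2). -/
def e1 : M2 := !![0, -Complex.I; -Complex.I, 0]

/-- Basis vector `e₂` of su(2). -/
def e2 : M2 := !![0, 1; -1, 0]

/-- Basis vector `e₃` of su(2). -/
def e3 : M2 := !![Complex.I, 0; 0, -Complex.I]

/-- The inner product `⟨X,Y⟩ = -(1/2) tr (XY)` identifying su(2) with E³. -/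
def ip (X Y : M2) : ℂ := -(1/2 : ℂ) * (X * Y).trace

/-- Partial derivative in the `x`-direction. -/
def px (f : ℂ → M2) (z : ℂ) : M2 := fderiv ℝ f z 1

/-- Partial derivative in the `y`-direction. -/
def py (f : ℂ → M2) (z : ℂ) : M2 := fderiv ℝ f z Complex.I

/-- Wirtinger derivative `∂_z = (1/2)(∂_x - i ∂_y)`. -/
def dz (f : ℂ → M2) (z : ℂ) : M2 := (2:ℂ)⁻¹ • (px f z - Complex.I • py f z)

/-- Wirtinger derivative `∂_z̄ = (1/2)(∂_x + i ∂_y)`. -/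
def dzb (f : ℂ → M2) (z : ℂ) : M2 := (2:ℂ)⁻¹ • (px f z + Complex.I • py f z)

/-- `x`-derivative of a real-valued function on ℂ. -/
def pxR (u : ℂ → ℝ) (z : ℂ) : ℝ := fderiv ℝ u z 1

/-- `y`-derivative of a real-valued function on ℂ. -/
def pyR (u : ℂ → ℝ) (z : ℂ) : ℝ := fderiv ℝ u z Complex.I

/-- Wirtinger derivative `u_z` of a real-valued function. -/
def dzR (u : ℂ → ℝ) (z : ℂ) : ℂ := (2:ℂ)⁻¹ * ((pxR u z : ℂ) - Complex.I * (pyR u z : ℂ))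

/-- Wirtinger derivative `u_z̄` of a real-valued function. -/
def dzbR (u : ℂ → ℝ) (z : ℂ) : ℂ := (2:ℂ)⁻¹ * ((pxR u z : ℂ) + Complex.I * (pyR u z : ℂ))

/-- `x`-derivative of a complex-valued function on ℂ. -/
def pxC (q : ℂ → ℂ) (z : ℂ) : ℂ := fderiv ℝ q z 1

/-- `y`-derivative of a complex-valued function on ℂ. -/
def pyC (q : ℂ → ℂ) (z : ℂ) : ℂ := fderiv ℝ q z Complex.I

/-- Wirtinger derivative `∂_z` of a complex-valued function. -/
def dzC (q : ℂ → ℂ) (z : ℂ) : ℂ := (2:ℂ)⁻¹ * (pxC q z - Complex.I * pyC q z)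

/-- Wirtinger derivative `∂_z̄` of a complex-valued function. -/
def dzbC (q : ℂ → ℂ) (z : ℂ) : ℂ := (2:ℂ)⁻¹ * (pxC q z + Complex.I * pyC q z)

lemma ip_deriv {g h : ℂ → M2} {z : ℂ} (hg : DifferentiableAt ℝ g z) (hh : DifferentiableAt ℝ h z) :
    DifferentiableAt ℝ (fun w => ip (g w) (h w)) z ∧ ∀ v, fderiv ℝ (fun w => ip (g w) (h w)) z v
      = ip (fderiv ℝ g z v) (h z) + ip (g z) (fderiv ℝ h z v) := by
  let T : M2 →L[ℝ] ℂ := LinearMap.toContinuousLinearMap ((Matrix.traceLinearMap (Fin 2) ℝ ℂ))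
  have hT : ∀ X, T X = X.trace := fun X => rfl
  have h1 := ((T.hasFDerivAt.comp z (hg.hasFDerivAt.mul' hh.hasFDerivAt)).const_mul (-(1/2 : ℂ)))
  have h2 : HasFDerivAt (fun w => ip (g w) (h w)) _ z := h1
  refine ⟨h2.differentiableAt, fun v => ?_⟩
  rw [h2.fderiv]
  refine Eq.trans (b := -(1/2 : ℂ) * (g z * fderiv ℝ h z v + fderiv ℝ g z v * h z).trace) rfl ?_
  rw [Matrix.trace_add]
  simp [ip]
  ring

lemma ip_comm (X Y : M2) : ip X Y = ip Y X := by
  simp [ip, Matrix.trace_mul_comm X Y]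

lemma ip_expand0 (X Y : M2) (hX : X.trace = 0) :
    ip X Y = ip X e1 * ip Y e1 + ip X e2 * ip Y e2 + ip X e3 * ip Y e3 := by
  have h : X 1 1 = - X 0 0 := by
    rw [Matrix.trace_fin_two] at hX; linear_combination hX
  simp [ip, e1, e2, e3, Matrix.trace_fin_two, Matrix.mul_apply, Fin.sum_univ_two, h]
  ring_nf
  simp [Complex.I_sq]
  ring

lemma ip_conj (A B X Y : M2) (h : A * B = 1) : ip X (A * Y * B) = ip (B * X * A) Y := by
  unfold ip
  congr 1
  rw [← mul_assoc, Matrix.trace_mul_comm]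
  simp only [mul_assoc]

lemma ip_expand (A B X Y : M2) (h : A * B = 1) (hX : X.trace = 0) :
    ip X Y = ip X (A * e1 * B) * ip Y (A * e1 * B) + ip X (A * e2 * B) * ip Y (A * e2 * B)
      + ip X (A * e3 * B) * ip Y (A * e3 * B) := by
  have h' : B * A = 1 := mul_eq_one_comm.mp h
  simp only [ip_conj A B _ _ h]
  have : ip X Y = ip (B * X * A) (B * Y * A) := by
    unfold ip
    congr 1
    have : B * X * A * (B * Y * A) = B * (X * (A * B) * Y * A) := by simp only [mul_assoc]
    rw [this, h, Matrix.trace_mul_comm B, mul_assoc _ A B, h]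
    simp [mul_assoc, h]
  rw [this, ip_expand0]
  rw [mul_assoc, Matrix.trace_mul_comm, mul_assoc, h]
  simpa using hX

lemma e12 : e1 * e2 = e3 := by
  ext i j; fin_cases i <;> fin_cases j <;> simp [e1, e2, e3]
lemma e11 : ip e1 e1 = 1 := by simp [ip, e1, Matrix.trace_fin_two]; norm_num
lemma e22 : ip e2 e2 = 1 := by simp [ip, e2, Matrix.trace_fin_two]; norm_num
lemma e33 : ip e3 e3 = 1 := by simp [ip, e3, Matrix.trace_fin_two]; norm_num
lemma e13 : ip e1 e3 = 0 := by simp [ip, e1, e3, Matrix.trace_fin_two]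
lemma e23 : ip e2 e3 = 0 := by simp [ip, e2, e3, Matrix.trace_fin_two]
lemma ip_smul_l (c : ℂ) (X Y : M2) : ip (c • X) Y = c * ip X Y := by
  simp [ip, Matrix.trace_smul]; ring
lemma ip_smul_r (c : ℂ) (X Y : M2) : ip X (c • Y) = c * ip X Y := by
  simp [ip, Matrix.trace_smul]; ring
lemma ip_add_l (X Z Y : M2) : ip (X + Z) Y = ip X Y + ip Z Y := by
  simp [ip, add_mul, Matrix.trace_add]; ring
lemma ip_add_r (X Z Y : M2) : ip Y (X + Z) = ip Y X + ip Y Z := by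
  simp [ip, mul_add, Matrix.trace_add]
lemma ip_sub_r (X Z Y : M2) : ip Y (X - Z) = ip Y X - ip Y Z := by
  simp [ip, mul_sub, Matrix.trace_sub]

lemma ip_conj2 (A B X Y : M2) (h : A * B = 1) : ip (A * X * B) (A * Y * B) = ip X Y := by
  have h' : B * A = 1 := mul_eq_one_comm.mp h
  rw [ip_conj _ _ _ _ h]
  congr 1
  simp only [mul_assoc, h']
  simp [← mul_assoc, h']

lemma px_smooth {g : ℂ → M2} {S : Set ℂ} (hS : IsOpen S) (hg : ContDiffOn ℝ (⊤ : ℕ∞) g S) (v : ℂ) :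
    ContDiffOn ℝ (⊤ : ℕ∞) (fun z => fderiv ℝ g z v) S := by
  have := hg.fderiv_of_isOpen (m := (⊤ : ℕ∞)) hS (by simp)
  exact this.clm_apply contDiffOn_const

lemma smooth_diff {g : ℂ → M2} {S : Set ℂ} (hS : IsOpen S) (hg : ContDiffOn ℝ (⊤ : ℕ∞) g S) {z : ℂ} (hz : z ∈ S) :
    DifferentiableAt ℝ g z := (hg.differentiableOn (by simp)).differentiableAt (hS.mem_nhds hz)

lemma px_symm {g : ℂ → M2} {S : Set ℂ} (hS : IsOpen S) (hg : ContDiffOn ℝ (⊤ : ℕ∞) g S) {z : ℂ} (hz : z ∈ S) :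
    py (px g) z = px (py g) z := by
  have h1 : ContDiffAt ℝ (⊤ : ℕ∞) g z := hg.contDiffAt (hS.mem_nhds hz)
  have h2 := h1.isSymmSndFDerivAt (by simp; exact WithTop.coe_le_coe.mpr le_top)
  have h3 : DifferentiableAt ℝ (fderiv ℝ g) z :=
    ((hg.fderiv_of_isOpen (m := (⊤ : ℕ∞)) hS (by simp)).differentiableOn (by simp)).differentiableAt (hS.mem_nhds hz)
  have key : ∀ v w, fderiv ℝ (fun z => fderiv ℝ g z v) z w = fderiv ℝ (fderiv ℝ g) z w v := by
    intro v w
    have := (h3.hasFDerivAt.clm_apply (hasFDerivAt_const v z)).fderiv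
    have := DFunLike.congr_fun this w
    refine Eq.trans this ?_
    show fderiv ℝ g z 0 + fderiv ℝ (fderiv ℝ g) z w v = _
    rw [map_zero, zero_add]
  show fderiv ℝ (fun z => fderiv ℝ g z 1) z Complex.I = fderiv ℝ (fun z => fderiv ℝ g z Complex.I) z 1
  rw [key, key]
  exact h2 _ _

lemma trace_deriv {g : ℂ → M2} {z : ℂ} (hg : DifferentiableAt ℝ g z)
    (h0 : ∀ᶠ w in nhds z, (g w).trace = 0) (v : ℂ) : (fderiv ℝ g z v).trace = 0 := by
  let T : M2 →L[ℝ] ℂ := LinearMap.toContinuousLinearMap ((Matrix.traceLinearMap (Fin 2) ℝ ℂ))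
  have hT : ∀ X, T X = X.trace := fun X => rfl
  have h1 := (T.hasFDerivAt.comp z hg.hasFDerivAt)
  have h2 : HasFDerivAt (fun w => T (g w)) (0 : ℂ →L[ℝ] ℂ) z := by
    refine (hasFDerivAt_const (0:ℂ) z).congr_of_eventuallyEq ?_
    filter_upwards [h0] with w hw using hw
  have := h1.unique h2
  have := DFunLike.congr_fun this v
  exact this

lemma dz_dz {f : ℂ → M2} {S : Set ℂ} (hS : IsOpen S) (hf : ContDiffOn ℝ (⊤ : ℕ∞) f S) {z : ℂ} (hz : z ∈ S) :
    dz (dz f) z = (4:ℂ)⁻¹ • (px (px f) z - py (py f) z - (2 * Complex.I) • px (py f) z) := by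
  have hx : DifferentiableAt ℝ (px f) z := smooth_diff hS (px_smooth hS hf 1) hz
  have hy : DifferentiableAt ℝ (py f) z := smooth_diff hS (px_smooth hS hf Complex.I) hz
  have key : ∀ v, fderiv ℝ (dz f) z v = (2:ℂ)⁻¹ • (fderiv ℝ (px f) z v - Complex.I • fderiv ℝ (py f) z v) := by
    intro v
    have h := (hx.hasFDerivAt.sub (hy.hasFDerivAt.const_smul Complex.I)).const_smul ((2:ℂ)⁻¹)
    have h2 : HasFDerivAt (dz f) _ z := h
    rw [h2.fderiv]
    rfl
  have h1 : px (dz f) z = (2:ℂ)⁻¹ • (px (px f) z - Complex.I • px (py f) z) := key 1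
  have h2 : py (dz f) z = (2:ℂ)⁻¹ • (py (px f) z - Complex.I • py (py f) z) := key Complex.I
  unfold dz
  unfold dz at h1 h2
  rw [h1, h2, px_symm hS hf hz]
  ext i j
  simp
  linear_combination (1/4) * py (py f) z i j * Complex.I_sq

lemma hopf_holo {S : Set ℂ} (hS : IsOpen S) {f N : ℂ → M2} {G : ℂ → ℂ} (H : ℂ)
    (hf : ContDiffOn ℝ (⊤ : ℕ∞) f S) (hN : ∀ z ∈ S, DifferentiableAt ℝ N z)
    (hNN : ∀ z ∈ S, ip (N z) (N z) = 1)
    (hNx : ∀ z ∈ S, ip (N z) (px f z) = 0)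
    (hNy : ∀ z ∈ S, ip (N z) (py f z) = 0)
    (hNt : ∀ z ∈ S, (N z).trace = 0)
    (hxx : ∀ z ∈ S, ip (px f z) (px f z) = G z)
    (hyy : ∀ z ∈ S, ip (py f z) (py f z) = G z)
    (hxy : ∀ z ∈ S, ip (px f z) (py f z) = 0)
    (hG : ∀ z ∈ S, G z ≠ 0)
    (hexp : ∀ z ∈ S, ∀ X Y : M2, X.trace = 0 → G z * ip X Y =
      ip X (px f z) * ip Y (px f z) + ip X (py f z) * ip Y (py f z) + G z * (ip X (N z) * ip Y (N z)))
    (hH : ∀ z ∈ S, ip (N z) (px (px f) z) + ip (N z) (py (py f) z) = 2 * H * G z)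
    {z : ℂ} (hz : z ∈ S) :
    DifferentiableAt ℂ (fun z => ip (N z) (dz (dz f) z)) z := by
  have ev : ∀ {a b : ℂ → ℂ}, (∀ z ∈ S, a z = b z) → ∀ v, fderiv ℝ a z v = fderiv ℝ b z v := by
    intro a b hab v
    have : a =ᶠ[nhds z] b := by filter_upwards [hS.mem_nhds hz] with w hw using hab w hw
    rw [this.fderiv_eq]
  have evM : ∀ {a b : ℂ → M2}, (∀ z ∈ S, a z = b z) → ∀ v, fderiv ℝ a z v = fderiv ℝ b z v := by
    intro a b hab v
    have : a =ᶠ[nhds z] b := by filter_upwards [hS.mem_nhds hz] with w hw using hab w hw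
    rw [this.fderiv_eq]
  have c : ∀ (c : ℂ) v, fderiv ℝ (fun _ : ℂ => c) z v = 0 := by intro c v; simp
  have sx : ContDiffOn ℝ (⊤ : ℕ∞) (px f) S := px_smooth hS hf 1
  have sy : ContDiffOn ℝ (⊤ : ℕ∞) (py f) S := px_smooth hS hf Complex.I
  have sxx : ContDiffOn ℝ (⊤ : ℕ∞) (px (px f)) S := px_smooth hS sx 1
  have sxy : ContDiffOn ℝ (⊤ : ℕ∞) (px (py f)) S := px_smooth hS sy 1
  have syy : ContDiffOn ℝ (⊤ : ℕ∞) (py (py f)) S := px_smooth hS sy Complex.I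
  have dx := smooth_diff hS sx hz
  have dy := smooth_diff hS sy hz
  have dxx := smooth_diff hS sxx hz
  have dxy := smooth_diff hS sxy hz
  have dyy := smooth_diff hS syy hz
  have dN := hN z hz
  have sym := px_symm hS hf hz
  -- third derivatives
  have t1 : py (px (px f)) z = px (px (py f)) z := by
    rw [px_symm hS sx hz]
    exact evM (fun w hw => px_symm hS hf hw) 1
  have t2 : py (px (py f)) z = px (py (py f)) z := px_symm hS sy hz
  -- derivative facts
  have nt : ∀ v, (fderiv ℝ N z v).trace = 0 := fun v => trace_deriv dN
    (by filter_upwards [hS.mem_nhds hz] with w hw using hNt w hw) v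
  have a1 : ∀ v, ip (fderiv ℝ N z v) (N z) = 0 := by
    intro v
    have h := (ip_deriv dN dN).2 v
    rw [ev hNN v, c, ip_comm (N z)] at h
    linear_combination -(1/2) * h
  have a2 : ∀ v, ip (fderiv ℝ N z v) (px f z) = - ip (N z) (fderiv ℝ (px f) z v) := by
    intro v
    have h := (ip_deriv dN dx).2 v
    rw [ev hNx v, c] at h
    linear_combination - h
  have a3 : ∀ v, ip (fderiv ℝ N z v) (py f z) = - ip (N z) (fderiv ℝ (py f) z v) := by
    intro v
    have h := (ip_deriv dN dy).2 v
    rw [ev hNy v, c] at h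
    linear_combination - h
  have b1 : ∀ v, ip (fderiv ℝ (px f) z v) (px f z) = (1/2) * fderiv ℝ G z v := by
    intro v
    have h := (ip_deriv dx dx).2 v
    rw [ev hxx v, ip_comm (px f z)] at h
    linear_combination -(1/2) * h
  have b2 : ∀ v, ip (fderiv ℝ (py f) z v) (py f z) = (1/2) * fderiv ℝ G z v := by
    intro v
    have h := (ip_deriv dy dy).2 v
    rw [ev hyy v, ip_comm (py f z)] at h
    linear_combination -(1/2) * h
  have b3 : ∀ v, ip (fderiv ℝ (px f) z v) (py f z) = - ip (fderiv ℝ (py f) z v) (px f z) := by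
    intro v
    have h := (ip_deriv dx dy).2 v
    rw [ev hxy v, c, ip_comm (px f z)] at h
    linear_combination - h
  have ax1 : ip (px N z) (px f z) = - ip (N z) (px (px f) z) := a2 1
  have ay1 : ip (py N z) (px f z) = - ip (N z) (px (py f) z) := by rw [← sym]; exact a2 Complex.I
  have ax2 : ip (px N z) (py f z) = - ip (N z) (px (py f) z) := a3 1
  have ay2 : ip (py N z) (py f z) = - ip (N z) (py (py f) z) := a3 Complex.I
  have ax3 : ip (px N z) (N z) = 0 := a1 1
  have ay3 : ip (py N z) (N z) = 0 := a1 Complex.I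
  have bxx1 : ip (px (px f) z) (px f z) = (1/2) * pxC G z := b1 1
  have bxy1 : ip (px (py f) z) (px f z) = (1/2) * pyC G z := by rw [← sym]; exact b1 Complex.I
  have bxy2 : ip (px (py f) z) (py f z) = (1/2) * pxC G z := b2 1
  have byy2 : ip (py (py f) z) (py f z) = (1/2) * pyC G z := b2 Complex.I
  have bxx2 : ip (px (px f) z) (py f z) = - ((1/2) * pyC G z) := by
    rw [← bxy1]; exact b3 1
  have byy1 : ip (py (py f) z) (px f z) = - ((1/2) * pxC G z) := by
    have : ip (py (px f) z) (py f z) = - ip (py (py f) z) (px f z) := b3 Complex.I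
    rw [sym, bxy2] at this
    linear_combination this
  obtain ⟨dL, eL⟩ := ip_deriv dN dxx
  obtain ⟨dM, eM⟩ := ip_deriv dN dxy
  obtain ⟨dP, eP⟩ := ip_deriv dN dyy
  have hHz := hH z hz
  have hGz := hG z hz
  have dG : DifferentiableAt ℝ G z := by
    refine (ip_deriv dx dx).1.congr_of_eventuallyEq ?_
    filter_upwards [hS.mem_nhds hz] with w hw using (hxx w hw).symm
  have hHd : ∀ v, fderiv ℝ (fun z => ip (N z) (px (px f) z)) z v +
      fderiv ℝ (fun z => ip (N z) (py (py f) z)) z v = 2 * H * fderiv ℝ G z v := by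
    intro v
    have h := ev hH v
    have h1 := (dL.hasFDerivAt.add dP.hasFDerivAt).fderiv
    have h2 := (dG.hasFDerivAt.const_mul (2 * H)).fderiv
    have h1' := DFunLike.congr_fun h1 v
    have h2' := DFunLike.congr_fun h2 v
    exact (h1'.symm.trans h).trans h2'
  -- Codazzi
  have z1 := hexp z hz (py N z) (px (px f) z) (nt _)
  have z2 := hexp z hz (px N z) (px (py f) z) (nt _)
  have z3 := hexp z hz (py N z) (px (py f) z) (nt _)
  have z4 := hexp z hz (px N z) (py (py f) z) (nt _)
  rw [ay1, ay2, ay3, bxx1, bxx2] at z1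
  rw [ax1, ax2, ax3, bxy1, bxy2] at z2
  rw [ay1, ay2, ay3, bxy1, bxy2] at z3
  rw [ax1, ax2, ax3, byy1, byy2] at z4
  have C1 : ip (py N z) (px (px f) z) - ip (px N z) (px (py f) z) = H * pyC G z := by
    apply mul_left_cancel₀ hGz
    linear_combination z1 - z2 + (1/2) * pyC G z * hHz
  have C2 : ip (py N z) (px (py f) z) - ip (px N z) (py (py f) z) = - H * pxC G z := by
    apply mul_left_cancel₀ hGz
    linear_combination z3 - z4 - (1/2) * pxC G z * hHz
  have Lx := eL 1
  have Ly : fderiv ℝ (fun w => ip (N w) (px (px f) w)) z Complex.I =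
    ip (py N z) (px (px f) z) + ip (N z) (py (px (px f)) z) := eL Complex.I
  have Mx : fderiv ℝ (fun w => ip (N w) (px (py f) w)) z 1 =
    ip (px N z) (px (py f) z) + ip (N z) (px (px (py f)) z) := eM 1
  have My : fderiv ℝ (fun w => ip (N w) (px (py f) w)) z Complex.I =
    ip (py N z) (px (py f) z) + ip (N z) (py (px (py f)) z) := eM Complex.I
  have Px : fderiv ℝ (fun w => ip (N w) (py (py f) w)) z 1 =
    ip (px N z) (py (py f) z) + ip (N z) (px (py (py f)) z) := eP 1
  rw [t1] at Ly
  rw [t2] at My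
  have Hx : _ = 2 * H * pxC G z := hHd 1
  have Hy : _ = 2 * H * pyC G z := hHd Complex.I
  have hQ : (fun z => ip (N z) (dz (dz f) z)) =ᶠ[nhds z] fun z => (4:ℂ)⁻¹ * (ip (N z) (px (px f) z)
      - ip (N z) (py (py f) z) - (2 * Complex.I) * ip (N z) (px (py f) z)) := by
    filter_upwards [hS.mem_nhds hz] with w hw
    rw [dz_dz hS hf hw, ip_smul_r, ip_sub_r, ip_sub_r, ip_smul_r]
  refine DifferentiableAt.congr_of_eventuallyEq ?_ hQ
  rw [differentiableAt_complex_iff_differentiableAt_real]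
  have hD := ((dL.hasFDerivAt.sub dP.hasFDerivAt).sub (dM.hasFDerivAt.const_mul (2 * Complex.I))).const_mul ((4:ℂ)⁻¹)
  refine ⟨hD.differentiableAt, ?_⟩
  have hD' : HasFDerivAt (fun z => (4:ℂ)⁻¹ * (ip (N z) (px (px f) z)
      - ip (N z) (py (py f) z) - (2 * Complex.I) * ip (N z) (px (py f) z))) _ z := hD
  rw [hD'.fderiv]
  simp only [ContinuousLinearMap.smul_apply, ContinuousLinearMap.sub_apply, smul_eq_mul]
  generalize fderiv ℝ (fun w => ip (N w) (px (px f) w)) z 1 = lx at *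
  generalize fderiv ℝ (fun w => ip (N w) (px (px f) w)) z Complex.I = ly at *
  generalize fderiv ℝ (fun w => ip (N w) (py (py f) w)) z 1 = px' at *
  generalize fderiv ℝ (fun w => ip (N w) (py (py f) w)) z Complex.I = py' at *
  generalize fderiv ℝ (fun w => ip (N w) (px (py f) w)) z 1 = mx at *
  generalize fderiv ℝ (fun w => ip (N w) (px (py f) w)) z Complex.I = my at *
  have k1 : ly - mx = H * pyC G z := by rw [Ly, Mx, ← C1]; ring
  have k2 : my - px' = - H * pxC G z := by rw [My, Px, ← C2]; ring
  have i2 := Complex.I_sq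
  linear_combination (1/2) * k1 - (1/4) * Hy - Complex.I * (1/2) * k2 - Complex.I / 4 * Hx + (1/2) * mx * i2

lemma real_prim {S : Set ℂ} (hS : IsOpen S) {Q : ℂ → ℂ} (hQ : ∀ z ∈ S, DifferentiableAt ℂ Q z)
    {J : Set ℝ} (hJo : IsOpen J) (hJS : ∀ x ∈ J, (x : ℂ) ∈ S) {θ : ℝ → ℝ}
    (hθ : ∀ x ∈ J, HasDerivAt θ (-(Q x).im) x) : AnalyticOnNhd ℝ θ J := by
  intro x hx
  obtain ⟨r, hr, hrS⟩ := Metric.isOpen_iff.1 hS x (hJS x hx)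
  obtain ⟨s, hs, hsJ⟩ := Metric.isOpen_iff.1 hJo x hx
  obtain ⟨g, hg⟩ := DifferentiableOn.isExactOn_ball (f := Q) (c := (x:ℂ)) (r := r)
    (fun z hz => (hQ z (hrS hz)).differentiableWithinAt)
  have hga : AnalyticAt ℂ g x := by
    have : DifferentiableOn ℂ g (Metric.ball (x:ℂ) r) := fun z hz => (hg z hz).differentiableAt.differentiableWithinAt
    exact this.analyticAt (Metric.isOpen_ball.mem_nhds (Metric.mem_ball_self hr))
  have h1 : AnalyticAt ℝ (fun t : ℝ => -(g t).im) x := by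
    have h2 : AnalyticAt ℝ g (x:ℂ) := hga.restrictScalars
    have h3 : AnalyticAt ℝ (fun t : ℝ => (t : ℂ)) x := Complex.ofRealCLM.analyticAt x
    have h4 : AnalyticAt ℝ (fun t : ℝ => g (t : ℂ)) x := h2.comp h3
    exact ((Complex.imCLM.analyticAt _).comp h4).neg
  have hd : ∀ t ∈ Metric.ball x (min r s), HasDerivAt (fun t : ℝ => θ t - -(g t).im) 0 t := by
    intro t ht
    have htr : (t:ℂ) ∈ Metric.ball (x:ℂ) r := by
      rw [Metric.mem_ball, Complex.dist_of_im_eq (by simp)]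
      simpa using lt_of_lt_of_le ht (min_le_left _ _)
    have htJ : t ∈ J := hsJ (Metric.ball_subset_ball (min_le_right _ _) ht)
    have h5 := (hg _ htr).comp_ofReal
    have h6 : HasDerivAt (fun t : ℝ => (g t).im) (Q t).im t := 
      (Complex.imCLM.hasFDerivAt.comp_hasDerivAt t h5)
    exact ((hθ t htJ).sub h6.neg).congr_deriv (by simp)
  obtain ⟨c, hc⟩ := Metric.isOpen_ball.exists_is_const_of_deriv_eq_zero
    (convex_ball x (min r s)).isPreconnected
    (fun t ht => (hd t ht).differentiableAt.differentiableWithinAt) (fun t ht => (hd t ht).deriv)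
  have h7 : AnalyticAt ℝ (fun t : ℝ => c + -(g t).im) x := analyticAt_const.add h1
  refine h7.congr ?_
  filter_upwards [Metric.ball_mem_nhds x (lt_min hr hs)] with t ht
  have := hc t ht
  linarith

lemma exists_prim {J : Set ℝ} (hJo : IsOpen J) (hJc : J.OrdConnected) {x₀ : ℝ} (hx₀ : x₀ ∈ J)
    {φ : ℝ → ℝ} (hφ : ∀ x ∈ J, ContinuousAt φ x) :
    ∃ θ : ℝ → ℝ, θ x₀ = 0 ∧ ∀ x ∈ J, HasDerivAt θ (φ x) x := by
  have hc : ContinuousOn φ J := fun x hx => (hφ x hx).continuousWithinAt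
  refine ⟨fun x => ∫ t in x₀..x, φ t, by simp, fun x hx => ?_⟩
  refine intervalIntegral.integral_hasDerivAt_right ?_ ?_ (hφ x hx)
  · exact (hc.mono (hJc.uIcc_subset hx₀ hx)).intervalIntegrable
  · exact hc.stronglyMeasurableAtFilter hJo x hx

/-- CMC surfaces containing a line segment (converse): if a conformal CMC
`H ≠ 0` immersion contains the segment `x ↦ (2x,0,0)` over `J × {0}` with
`∂_y f(x₀,0)` a positive multiple of `e₂`, then `u = 0` along the segment and there is a
real analytic angle function `θ₀` with `θ₀(x₀) = 0` describing the normal, with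
`∂_y f(x,0) = 2(cos θ₀ e₂ + sin θ₀ e₃)` and `Q(x,0) = -i θ₀′(x) - 2H`. -/
theorem cmc_containing_line_converse
    (J : Set ℝ) (hJo : IsOpen J) (hJc : J.OrdConnected)
    (x₀ : ℝ) (hx₀ : x₀ ∈ J)
    (H : ℝ) (hH : H ≠ 0)
    (S : Set ℂ) (hS : IsOpen S) (hJS : ∀ x ∈ J, (x : ℂ) ∈ S)
    (f : ℂ → M2) (u : ℂ → ℝ) (F : ℂ → M2)
    (hf : ContDiffOn ℝ (⊤ : ℕ∞) f S)
    (hu : ContDiffOn ℝ (⊤ : ℕ∞) u S)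
    (hF : ContDiffOn ℝ (⊤ : ℕ∞) F S)
    (hsu2 : ∀ z ∈ S, (f z)ᴴ = -(f z) ∧ (f z).trace = 0)
    (hconf : ∀ z ∈ S,
      ip (px f z) (px f z) = ((4 * Real.exp (2 * u z) : ℝ) : ℂ) ∧
      ip (py f z) (py f z) = ((4 * Real.exp (2 * u z) : ℝ) : ℂ) ∧
      ip (px f z) (py f z) = 0)
    (hFunit : ∀ z ∈ S, (F z)ᴴ * F z = 1 ∧ (F z).det = 1)
    (hFe1 : ∀ z ∈ S, F z * e1 * (F z)⁻¹ = (((2 * Real.exp (u z))⁻¹ : ℝ) : ℂ) • px f z)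
    (hFe2 : ∀ z ∈ S, F z * e2 * (F z)⁻¹ = (((2 * Real.exp (u z))⁻¹ : ℝ) : ℂ) • py f z)
    (hcmc : ∀ z ∈ S, ip (px (px f) z + py (py f) z) (F z * e3 * (F z)⁻¹)
      = ((8 * Real.exp (2 * u z) * H : ℝ) : ℂ))
    (hline : ∀ x ∈ J, f (x : ℂ) = ((2 * x : ℝ) : ℂ) • e1)
    (hx₀tan : ∃ c : ℝ, 0 < c ∧ py f (x₀ : ℂ) = (c : ℂ) • e2) :
    (∀ x ∈ J, u (x : ℂ) = 0) ∧
    ∃ θ₀ : ℝ → ℝ, AnalyticOnNhd ℝ θ₀ J ∧ θ₀ x₀ = 0 ∧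
      (∀ x ∈ J, py f (x : ℂ) =
        (2 : ℂ) • (((Real.cos (θ₀ x) : ℝ) : ℂ) • e2 + ((Real.sin (θ₀ x) : ℝ) : ℂ) • e3)) ∧
      (∀ x ∈ J, ip (F (x : ℂ) * e3 * (F (x : ℂ))⁻¹) (dz (dz f) (x : ℂ))
        = -Complex.I * ((deriv θ₀ x : ℝ) : ℂ) - 2 * (H : ℂ)) := by
  have hinv : ∀ z ∈ S, F z * (F z)⁻¹ = 1 := fun z hz =>
    Matrix.mul_nonsing_inv _ (by rw [(hFunit z hz).2]; exact isUnit_one)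
  have hinv' : ∀ z ∈ S, (F z)⁻¹ * F z = 1 := fun z hz => mul_eq_one_comm.mp (hinv z hz)
  have hinvH : ∀ z ∈ S, (F z)⁻¹ = (F z)ᴴ := fun z hz => Matrix.inv_eq_left_inv (hFunit z hz).1
  -- the normal
  set N : ℂ → M2 := fun z => F z * e3 * (F z)⁻¹ with hNdef
  set E : ℂ → ℂ := fun z => ((2 * Real.exp (u z) : ℝ) : ℂ) with hE
  have hE0 : ∀ z, E z ≠ 0 := fun z => by
    simp only [hE]; exact_mod_cast (by positivity : (2 * Real.exp (u z) : ℝ) ≠ 0)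
  have hEE : ∀ z, ((4 * Real.exp (2 * u z) : ℝ) : ℂ) = E z * E z := by
    intro z
    simp only [hE]
    rw [← Complex.ofReal_mul]
    congr 1
    rw [two_mul (u z), Real.exp_add]; ring
  have hpx : ∀ z ∈ S, px f z = E z • (F z * e1 * (F z)⁻¹) := by
    intro z hz
    rw [hFe1 z hz, smul_smul, Complex.ofReal_inv, mul_inv_cancel₀ (hE0 z), one_smul]
  have hpy : ∀ z ∈ S, py f z = E z • (F z * e2 * (F z)⁻¹) := by
    intro z hz
    rw [hFe2 z hz, smul_smul, Complex.ofReal_inv, mul_inv_cancel₀ (hE0 z), one_smul]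
  have hT12 : ∀ z ∈ S, N z = (F z * e1 * (F z)⁻¹) * (F z * e2 * (F z)⁻¹) := by
    intro z hz
    have : (F z * e1 * (F z)⁻¹) * (F z * e2 * (F z)⁻¹) = F z * e1 * ((F z)⁻¹ * F z) * e2 * (F z)⁻¹ := by
      simp only [mul_assoc]
    rw [this, hinv' z hz, mul_one, mul_assoc (F z), e12]
  have hNd : ∀ z ∈ S, DifferentiableAt ℝ N z := by
    intro z hz
    have hFd := (smooth_diff hS hF hz).hasFDerivAt
    let C : M2 →L[ℝ] M2 := LinearMap.toContinuousLinearMap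
      { toFun := fun X => Xᴴ
        map_add' := fun X Y => Matrix.conjTranspose_add X Y
        map_smul' := fun r X => by ext i j; simp [Matrix.conjTranspose_apply] }
    have hC : HasFDerivAt (fun w => (F w)ᴴ) _ z := C.hasFDerivAt.comp z hFd
    have h1 : DifferentiableAt ℝ (fun w => F w * e3 * (F w)ᴴ) z :=
      ((hFd.mul' (hasFDerivAt_const e3 z)).mul' hC).differentiableAt
    refine h1.congr_of_eventuallyEq ?_
    filter_upwards [hS.mem_nhds hz] with w hw
    rw [← hinvH w hw]
  have trc : ∀ z ∈ S, ∀ X : M2, (F z * X * (F z)⁻¹).trace = X.trace := by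
    intro z hz X
    rw [Matrix.trace_mul_comm, ← mul_assoc, hinv' z hz, one_mul]
  have hNt : ∀ z ∈ S, (N z).trace = 0 := by
    intro z hz
    simp only [hNdef]
    rw [trc z hz]; simp [e3, Matrix.trace_fin_two]
  have hQ : ∀ z ∈ S, DifferentiableAt ℂ (fun z => ip (N z) (dz (dz f) z)) z := by
    intro z hz
    refine hopf_holo hS (G := fun z => E z * E z) (H : ℂ) hf hNd ?_ ?_ ?_ hNt ?_ ?_ ?_ ?_ ?_ ?_ hz
    · intro z hz; rw [ip_conj2 _ _ _ _ (hinv z hz), e33]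
    · intro z hz; rw [hpx z hz, ip_smul_r, ip_conj2 _ _ _ _ (hinv z hz), ip_comm, e13, mul_zero]
    · intro z hz; rw [hpy z hz, ip_smul_r, ip_conj2 _ _ _ _ (hinv z hz), ip_comm, e23, mul_zero]
    · intro z hz; rw [(hconf z hz).1, hEE]
    · intro z hz; rw [(hconf z hz).2.1, hEE]
    · intro z hz; exact (hconf z hz).2.2
    · intro z hz; exact mul_ne_zero (hE0 z) (hE0 z)
    · intro z hz X Y hX
      rw [hpx z hz, hpy z hz, ip_expand _ _ X Y (hinv z hz) hX]
      simp only [ip_smul_r, hNdef]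
      ring
    · intro z hz
      have h := hcmc z hz
      rw [ip_comm, ip_add_r] at h
      simp only [hNdef]
      rw [h, ← hEE]
      push_cast; ring
  -- restriction to the line
  have rest : ∀ {g : ℂ → M2} {x : ℝ}, DifferentiableAt ℝ g (x : ℂ) →
      HasDerivAt (fun t : ℝ => g t) (px g x) x := by
    intro g x hg
    have h := hg.hasFDerivAt.comp_hasDerivAt x (Complex.ofRealCLM.hasDerivAt (x := x))
    have h2 : fderiv ℝ g (x : ℂ) (Complex.ofRealCLM 1) = px g x := by simp [px]
    exact h.congr_deriv h2
  have sx : ContDiffOn ℝ (⊤ : ℕ∞) (px f) S := px_smooth hS hf 1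
  have sy : ContDiffOn ℝ (⊤ : ℕ∞) (py f) S := px_smooth hS hf Complex.I
  have hpxJ : ∀ x ∈ J, px f (x : ℂ) = (2 : ℂ) • e1 := by
    intro x hx
    have h1 := rest (smooth_diff hS hf (hJS x hx))
    have h2 : HasDerivAt (fun t : ℝ => ((2 * t : ℝ) : ℂ) • e1) ((2 : ℂ) • e1) x := by
      have h3 : HasDerivAt (fun t : ℝ => ((2 * t : ℝ) : ℂ)) (2 : ℂ) x := by
        have := ((hasDerivAt_id x).const_mul (2 : ℝ)).ofReal_comp
        simpa using this
      exact h3.smul_const e1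
    have h4 : HasDerivAt (fun t : ℝ => f t) ((2 : ℂ) • e1) x := by
      refine h2.congr_of_eventuallyEq ?_
      filter_upwards [hJo.mem_nhds hx] with t ht using hline t ht
    exact h1.unique h4
  have hpxxJ : ∀ x ∈ J, px (px f) (x : ℂ) = 0 := by
    intro x hx
    have h1 := rest (smooth_diff hS sx (hJS x hx))
    have h4 : HasDerivAt (fun t : ℝ => px f t) (0 : M2) x := by
      refine (hasDerivAt_const x ((2 : ℂ) • e1)).congr_of_eventuallyEq ?_
      filter_upwards [hJo.mem_nhds hx] with t ht using hpxJ t ht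
    exact h1.unique h4
  have hu0 : ∀ x ∈ J, u (x : ℂ) = 0 := by
    intro x hx
    have h := (hconf _ (hJS x hx)).1
    rw [hpxJ x hx, ip_smul_l, ip_smul_r, e11] at h
    have h' : (4 : ℝ) = 4 * Real.exp (2 * u x) := by
      have : ((4 : ℝ) : ℂ) = ((4 * Real.exp (2 * u x) : ℝ) : ℂ) := by
        rw [← h]; norm_num
      exact_mod_cast this
    have h2 : Real.exp (2 * u x) = 1 := by linarith
    have := (Real.exp_eq_one_iff _).1 h2
    linarith
  have hE2 : ∀ x ∈ J, E (x : ℂ) = 2 := by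
    intro x hx; simp [hE, hu0 x hx]
  refine ⟨hu0, ?_⟩
  -- coordinates of f_y
  set a : ℝ → ℝ := fun t => (ip (py f t) e2).re / 2 with ha
  set b : ℝ → ℝ := fun t => (ip (py f t) e3).re / 2 with hb
  have hcoord : ∀ x ∈ J, py f (x : ℂ) = (2 : ℂ) • (((a x : ℝ) : ℂ) • e2 + ((b x : ℝ) : ℂ) • e3) := by
    intro x hx
    have hz := hJS x hx
    have htr : (py f (x : ℂ)).trace = 0 := by
      rw [hpy _ hz, Matrix.trace_smul, trc _ hz]; simp [e2, Matrix.trace_fin_two]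
    have hsk : (py f (x : ℂ))ᴴ = - py f (x : ℂ) := by
      rw [hpy _ hz, hinvH _ hz, hE2 x hx]
      have : e2ᴴ = - e2 := by
        ext i j; fin_cases i <;> fin_cases j <;> simp [e2]
      simp [Matrix.conjTranspose_mul, this, mul_assoc]
    have h1 : ip (py f (x : ℂ)) e1 = 0 := by
      have := (hconf _ hz).2.2
      rw [hpxJ x hx, ip_smul_l, ip_comm] at this
      simpa using this
    simp only [ha, hb]
    generalize py f (x : ℂ) = A at *
    have s00 := congrFun (congrFun hsk 0) 0
    have s01 := congrFun (congrFun hsk 0) 1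
    simp [Matrix.conjTranspose_apply] at s00 s01
    rw [Matrix.trace_fin_two] at htr
    have s11 : A 1 1 = - A 0 0 := by linear_combination htr
    have h1' : A 0 1 + A 1 0 = 0 := by
      simp [ip, e1, Matrix.trace_fin_two, Matrix.mul_apply, Fin.sum_univ_two] at h1
      linear_combination Complex.I * h1 + (A 0 1 + A 1 0) * Complex.I_sq
    have s10 : A 1 0 = - A 0 1 := by linear_combination h1'
    have r00 : (A 0 0).re = 0 := by
      have := congrArg Complex.re s00; simp at this; linarith
    have r01 : (A 0 1).im = 0 := by
      have := congrArg Complex.im s01; rw [s10] at this; simp at this; linarith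
    ext i j
    fin_cases i <;> fin_cases j <;> apply Complex.ext <;>
      simp [ip, e2, e3, Matrix.trace_fin_two, Matrix.mul_apply, Fin.sum_univ_two, s11, s10, r00, r01] <;> ring
  have hab : ∀ x ∈ J, a x ^ 2 + b x ^ 2 = 1 := by
    intro x hx
    have h := (hconf _ (hJS x hx)).2.1
    rw [hcoord x hx, hu0 x hx] at h
    simp only [ip_smul_l, ip_smul_r, ip_add_l, ip_add_r, e22, e33, e23, ip_comm e3 e2] at h
    have : ((a x ^ 2 + b x ^ 2 : ℝ) : ℂ) = 1 := by
      push_cast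
      simp at h
      linear_combination (1/4) * h
    exact_mod_cast this
  -- derivatives of the coordinates
  set a' : ℝ → ℝ := fun t => (ip (px (py f) t) e2).re / 2 with ha'
  set b' : ℝ → ℝ := fun t => (ip (px (py f) t) e3).re / 2 with hb'
  have ipd : ∀ (Y : M2) (x : ℝ), x ∈ J →
      HasDerivAt (fun t : ℝ => (ip (py f t) Y).re / 2) ((ip (px (py f) x) Y).re / 2) x := by
    intro Y x hx
    obtain ⟨h1, h2⟩ := ip_deriv (smooth_diff hS sy (hJS x hx)) (differentiableAt_const Y)
    have h3 := h1.hasFDerivAt.comp_hasDerivAt x (Complex.ofRealCLM.hasDerivAt (x := x))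
    have h4 := (Complex.reCLM.hasFDerivAt.comp_hasDerivAt x h3).div_const 2
    refine h4.congr_deriv ?_
    have h5 := h2 1
    have h6 : fderiv ℝ (fun _ : ℂ => Y) (x : ℂ) 1 = 0 := by
      rw [(hasFDerivAt_const Y (x : ℂ)).fderiv]; rfl
    rw [h6] at h5
    have h7 : ip (py f (x : ℂ)) 0 = 0 := by simp [ip]
    rw [h7, add_zero] at h5
    show (fderiv ℝ (fun w => ip (py f w) Y) (x : ℂ) ((1 : ℝ) : ℂ)).re / 2 = _
    rw [Complex.ofReal_one, h5]
    rfl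
  have hda : ∀ x ∈ J, HasDerivAt a (a' x) x := ipd e2
  have hdb : ∀ x ∈ J, HasDerivAt b (b' x) x := ipd e3
  have hfxy : ∀ x ∈ J, px (py f) (x : ℂ) = (2 : ℂ) • (((a' x : ℝ) : ℂ) • e2 + ((b' x : ℝ) : ℂ) • e3) := by
    intro x hx
    have h1 := rest (smooth_diff hS sy (hJS x hx))
    have h2 : HasDerivAt (fun t : ℝ => (2 : ℂ) • (((a t : ℝ) : ℂ) • e2 + ((b t : ℝ) : ℂ) • e3))
      ((2 : ℂ) • (((a' x : ℝ) : ℂ) • e2 + ((b' x : ℝ) : ℂ) • e3)) x :=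
      (((hda x hx).ofReal_comp.smul_const e2).add ((hdb x hx).ofReal_comp.smul_const e3)).const_smul (2 : ℂ)
    refine h1.unique (h2.congr_of_eventuallyEq ?_)
    filter_upwards [hJo.mem_nhds hx] with t ht using hcoord t ht
  have haa : ∀ x ∈ J, a x * a' x + b x * b' x = 0 := by
    intro x hx
    have h1 := ((hda x hx).pow 2).add ((hdb x hx).pow 2)
    have h2 : HasDerivAt (fun t => a t ^ 2 + b t ^ 2) 0 x := by
      refine (hasDerivAt_const x (1:ℝ)).congr_of_eventuallyEq ?_
      filter_upwards [hJo.mem_nhds hx] with t ht using hab t ht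
    have := HasDerivAt.unique h1 h2
    norm_num at this
    linarith
  have hNJ : ∀ x ∈ J, N (x : ℂ) = ((a x : ℝ) : ℂ) • e3 + (-((b x : ℝ) : ℂ)) • e2 := by
    intro x hx
    have hz := hJS x hx
    have h1 : N (x : ℂ) = (4 : ℂ)⁻¹ • (px f (x : ℂ) * py f (x : ℂ)) := by
      rw [hT12 _ hz, hpx _ hz, hpy _ hz, hE2 x hx, smul_mul_smul_comm, smul_smul]
      norm_num
    rw [h1, hpxJ x hx, hcoord x hx]
    ext i j
    fin_cases i <;> fin_cases j <;> simp [e1, e2, e3, Matrix.mul_apply, Fin.sum_univ_two] <;> ring_nf <;> simp [Complex.I_sq]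
  have hQJ : ∀ x ∈ J, ip (N (x : ℂ)) (dz (dz f) (x : ℂ)) =
      -Complex.I * ((a x * b' x - b x * a' x : ℝ) : ℂ) - 2 * (H : ℂ) := by
    intro x hx
    have hz := hJS x hx
    have hP : ip (N (x : ℂ)) (py (py f) (x : ℂ)) = 8 * H := by
      have h := hcmc _ hz
      rw [hpxxJ x hx, zero_add, ip_comm, hu0 x hx] at h
      simp only [hNdef]
      rw [h]; simp
    have h0 : ip (N (x : ℂ)) 0 = 0 := by simp [ip]
    have hM : ip (N (x : ℂ)) (px (py f) (x : ℂ)) = 2 * ((a x * b' x - b x * a' x : ℝ) : ℂ) := by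
      rw [hNJ x hx, hfxy x hx]
      simp only [ip_smul_l, ip_smul_r, ip_add_l, ip_add_r, e22, e33, e23, ip_comm e3 e2]
      push_cast; ring
    rw [dz_dz hS hf hz, ip_smul_r, ip_sub_r, ip_sub_r, ip_smul_r, hP, hM, hpxxJ x hx, h0]
    ring
  obtain ⟨θ, hθ0, hθ⟩ := exists_prim hJo hJc hx₀
    (φ := fun x : ℝ => -(ip (N (x : ℂ)) (dz (dz f) (x : ℂ))).im) (by
      intro x hx
      have h1 : ContinuousAt (fun z => ip (N z) (dz (dz f) z)) (x : ℂ) := (hQ _ (hJS x hx)).continuousAt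
      have h2 : ContinuousAt (fun t : ℝ => ip (N (t : ℂ)) (dz (dz f) (t : ℂ))) x :=
        ContinuousAt.comp (f := fun t : ℝ => (t : ℂ)) h1 Complex.continuous_ofReal.continuousAt
      exact (Complex.continuous_im.continuousAt.comp h2).neg)
  have hθan : AnalyticOnNhd ℝ θ J := real_prim hS hQ hJo hJS hθ
  have hθ' : ∀ x ∈ J, HasDerivAt θ (a x * b' x - b x * a' x) x := by
    intro x hx
    refine (hθ x hx).congr_deriv ?_
    rw [hQJ x hx]
    simp
  refine ⟨θ, hθan, hθ0, ?_, ?_⟩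
  · -- initial values
    have hab0 : a x₀ = 1 ∧ b x₀ = 0 := by
      obtain ⟨c, hc, hcy⟩ := hx₀tan
      have h1 : a x₀ = c / 2 := by
        simp only [ha]; rw [hcy, ip_smul_l, e22]; simp
      have h2 : b x₀ = 0 := by
        simp only [hb]; rw [hcy, ip_smul_l, e23]; simp
      have h3 := hab x₀ hx₀
      rw [h2] at h3
      refine ⟨?_, h2⟩
      have : 0 < a x₀ := by rw [h1]; linarith
      nlinarith
    have hc1 : ∀ x ∈ J, HasDerivAt (fun t => a t * Real.cos (θ t) + b t * Real.sin (θ t)) 0 x := by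
      intro x hx
      have h := ((hda x hx).mul (hθ' x hx).cos).add ((hdb x hx).mul (hθ' x hx).sin)
      refine h.congr_deriv ?_
      have h1 := hab x hx
      have h2 := haa x hx
      linear_combination (-Real.cos (θ x) * a' x - Real.sin (θ x) * b' x) * h1
        + (Real.cos (θ x) * a x + Real.sin (θ x) * b x) * h2
    have hc : ∀ x ∈ J, a x * Real.cos (θ x) + b x * Real.sin (θ x) = 1 := by
      intro x hx
      have := hJo.is_const_of_deriv_eq_zero hJc.isPreconnected
        (fun t ht => (hc1 t ht).differentiableAt.differentiableWithinAt)
        (fun t ht => (hc1 t ht).deriv) hx hx₀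
      rw [this, hθ0, hab0.1, hab0.2]; simp
    intro x hx
    have h1 := hab x hx
    have h2 := hc x hx
    have h3 := Real.sin_sq_add_cos_sq (θ x)
    have h4 : (a x - Real.cos (θ x)) ^ 2 + (b x - Real.sin (θ x)) ^ 2 = 0 := by
      linear_combination h1 + h3 - 2 * h2
    have h5 : a x = Real.cos (θ x) := by
      have : (a x - Real.cos (θ x)) ^ 2 = 0 := by nlinarith [sq_nonneg (a x - Real.cos (θ x)), sq_nonneg (b x - Real.sin (θ x))]
      have := pow_eq_zero_iff (two_ne_zero) |>.1 this
      linarith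
    have h6 : b x = Real.sin (θ x) := by
      have : (b x - Real.sin (θ x)) ^ 2 = 0 := by nlinarith [sq_nonneg (a x - Real.cos (θ x)), sq_nonneg (b x - Real.sin (θ x))]
      have := pow_eq_zero_iff (two_ne_zero) |>.1 this
      linarith
    rw [hcoord x hx, h5, h6]
  · intro x hx
    rw [(hθ' x hx).deriv]
    exact hQJ x hx
end
end

section
/- (Explicit Iwasawa factorization and Sym formula for the cylinder.) Let A = [[0,1],[1,0]] and z = x+iy ∈ ℂ. For every λ with |λ| = 1: (i) exp(zλ⁻¹A) = exp((zλ⁻¹ - z̄λ)A) · exp(z̄λA); (ii) F̂(z,λ) := exp((zλ⁻¹ - z̄λ)A) lies in SU(2); (iii) the second factor B̂(z,λ) = exp(z̄λA) extends holomorphically in λ to all of ℂ with B̂(z,0) = I; and (iv) for every real H ≠ 0, the Sym–Bobenko formula at λ = 1 gives S₁(F̂(z,·)) = -(1/(2H)) ( 4x·e₁ + sin(4y)·e₂ + cos(4y)·e₃ ), a round cylinder (a conformal immersion of constant mean curvature H). -/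
open Matrix Complex

noncomputable section

attribute [local instance] Matrix.linftyOpNormedAddCommGroup Matrix.linftyOpNormedSpace
  Matrix.linftyOpNormedRing Matrix.linftyOpNormedAlgebra

/-- The Sym–Bobenko formula `S_{λ₀}(G) = -(1/(2H)) (G e₃ G⁻¹ + 2iλ ∂_λ G · G⁻¹)` at `λ = λ₀`. -/
def symB (H : ℝ) (G : ℂ → M2) (l : ℂ) : M2 :=
  (-(2 * (H : ℂ))⁻¹) • (G l * e3 * (G l)⁻¹ + (2 * Complex.I * l) • (fderiv ℂ G l 1 * (G l)⁻¹))

/-- The off-diagonal matrix `A = [[0,1],[1,0]]`. -/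
def cylA : M2 := !![0, 1; 1, 0]

/-- The unitary factor `F̂(z,λ) = exp((zλ⁻¹ - z̄λ)A)` of the cylinder frame. -/
def cylF (z l : ℂ) : M2 := NormedSpace.exp (((z * l⁻¹ - (starRingEnd ℂ) z * l)) • cylA)

/-- The positive factor `B̂(z,λ) = exp(z̄λA)` of the cylinder frame. -/
def cylB (z l : ℂ) : M2 := NormedSpace.exp (((starRingEnd ℂ) z * l) • cylA)

lemma exp_cylA (c : ℂ) : NormedSpace.exp (c • cylA) =
    !![Complex.cosh c, Complex.sinh c; Complex.sinh c, Complex.cosh c] := by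
  have hdet : (!![1, 1; 1, -1] : M2).det ≠ 0 := by
    rw [Matrix.det_fin_two_of]; norm_num
  have hU : IsUnit (!![1, 1; 1, -1] : M2) := by
    rw [Matrix.isUnit_iff_isUnit_det]; exact isUnit_iff_ne_zero.mpr hdet
  have hinv : (!![1, 1; 1, -1] : M2)⁻¹ = !![1/2, 1/2; 1/2, -1/2] := by
    apply Matrix.inv_eq_right_inv
    ext i j; fin_cases i <;> fin_cases j <;> simp [Matrix.mul_apply, Fin.sum_univ_two] <;> norm_num
  have hd : ∀ a b : ℂ, (Matrix.diagonal ![a, b] : M2) = !![a, 0; 0, b] := by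
    intro a b
    ext i j; fin_cases i <;> fin_cases j <;> simp
  have h1 : c • cylA = !![1, 1; 1, -1] * (Matrix.diagonal ![c, -c] : M2) * (!![1, 1; 1, -1] : M2)⁻¹ := by
    rw [hinv, hd]
    ext i j; fin_cases i <;> fin_cases j <;>
      simp [cylA, Matrix.mul_apply, Fin.sum_univ_two] <;> ring
  have hv : NormedSpace.exp ![c, -c] = ![Complex.exp c, Complex.exp (-c)] := by
    ext i
    rw [Pi.coe_exp]
    fin_cases i <;> simp [Complex.exp_eq_exp_ℂ]
  rw [h1, Matrix.exp_conj _ _ hU, Matrix.exp_diagonal, hinv, hv, hd]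
  ext i j; fin_cases i <;> fin_cases j <;>
      simp [Matrix.mul_apply, Fin.sum_univ_two, Complex.cosh, Complex.sinh] <;> ring

lemma conj_arg (z l : ℂ) (hl : ‖l‖ = 1) :
    (starRingEnd ℂ) (z * l⁻¹ - (starRingEnd ℂ) z * l) = -(z * l⁻¹ - (starRingEnd ℂ) z * l) := by
  have h : l⁻¹ = (starRingEnd ℂ) l := Complex.inv_eq_conj hl
  rw [h]; simp

lemma ch_inv (c : ℂ) :
    (!![Complex.cosh c, Complex.sinh c; Complex.sinh c, Complex.cosh c] : M2)⁻¹ =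
    !![Complex.cosh c, -Complex.sinh c; -Complex.sinh c, Complex.cosh c] := by
  have h := Complex.cosh_sq_sub_sinh_sq c
  apply Matrix.inv_eq_right_inv
  ext i j; fin_cases i <;> fin_cases j <;> simp [Matrix.mul_apply, Fin.sum_univ_two] <;>
    first | linear_combination h | ring

lemma cylF_eq (z l : ℂ) : cylF z l =
    Complex.cosh (z * l⁻¹ - (starRingEnd ℂ) z * l) • (1 : M2) +
    Complex.sinh (z * l⁻¹ - (starRingEnd ℂ) z * l) • cylA := by
  rw [cylF, exp_cylA]
  ext i j; fin_cases i <;> fin_cases j <;> simp [cylA]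

lemma frame_arg_one (z : ℂ) : z * (1 : ℂ)⁻¹ - (starRingEnd ℂ) z * 1 = ((2 * z.im : ℝ) : ℂ) * Complex.I := by
  apply Complex.ext <;> simp; ring

lemma cylF_one (z : ℂ) : cylF z 1 =
    !![((Real.cos (2 * z.im) : ℝ) : ℂ), ((Real.sin (2 * z.im) : ℝ) : ℂ) * Complex.I;
      ((Real.sin (2 * z.im) : ℝ) : ℂ) * Complex.I, ((Real.cos (2 * z.im) : ℝ) : ℂ)] := by
  rw [cylF, exp_cylA, frame_arg_one, Complex.cosh_mul_I, Complex.sinh_mul_I,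
    Complex.ofReal_cos, Complex.ofReal_sin]

lemma cylF_one_inv (z : ℂ) : (cylF z 1)⁻¹ =
    !![((Real.cos (2 * z.im) : ℝ) : ℂ), -(((Real.sin (2 * z.im) : ℝ) : ℂ) * Complex.I);
      -(((Real.sin (2 * z.im) : ℝ) : ℂ) * Complex.I), ((Real.cos (2 * z.im) : ℝ) : ℂ)] := by
  rw [cylF, exp_cylA, ch_inv, frame_arg_one, Complex.cosh_mul_I, Complex.sinh_mul_I,
    Complex.ofReal_cos, Complex.ofReal_sin]

lemma cylF_deriv (z : ℂ) : fderiv ℂ (cylF z) 1 1 * (cylF z 1)⁻¹ =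
    ((-2 * z.re : ℝ) : ℂ) • cylA := by
  have hh : HasDerivAt (fun l : ℂ => z * l⁻¹ - (starRingEnd ℂ) z * l)
      ((-2 * z.re : ℝ) : ℂ) 1 := by
    have h := ((hasDerivAt_inv (one_ne_zero : (1 : ℂ) ≠ 0)).const_mul z).sub
      ((hasDerivAt_id (1 : ℂ)).const_mul ((starRingEnd ℂ) z))
    have e : z * -((1 : ℂ) ^ 2)⁻¹ - (starRingEnd ℂ) z * 1 = ((-2 * z.re : ℝ) : ℂ) := by
      apply Complex.ext <;> simp; ring
    rw [e] at h
    exact h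
  have hF := (hh.ccosh.smul_const (1 : M2)).add (hh.csinh.smul_const cylA)
  have hFe : cylF z = (fun l : ℂ => Complex.cosh (z * l⁻¹ - (starRingEnd ℂ) z * l) • (1 : M2)) +
      (fun l : ℂ => Complex.sinh (z * l⁻¹ - (starRingEnd ℂ) z * l) • cylA) := by
    funext l; exact cylF_eq z l
  rw [← hFe] at hF
  have hd : fderiv ℂ (cylF z) 1 1 = _ := hF.deriv
  rw [hd, cylF, exp_cylA, ch_inv]
  generalize ((-2 * z.re : ℝ) : ℂ) = d
  generalize z * (1 : ℂ)⁻¹ - (starRingEnd ℂ) z * 1 = c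
  have h := Complex.cosh_sq_sub_sinh_sq c
  ext i j; fin_cases i <;> fin_cases j <;> simp [cylA, Matrix.mul_apply, Fin.sum_univ_two] <;>
    first | linear_combination d * h | ring

lemma cs_sq (t : ℝ) : ((Real.cos t : ℝ) : ℂ) ^ 2 + ((Real.sin t : ℝ) : ℂ) ^ 2 = 1 := by
  exact_mod_cast Real.cos_sq_add_sin_sq t

lemma cos4 (t : ℝ) : ((Real.cos (4 * t) : ℝ) : ℂ) =
    ((Real.cos (2 * t) : ℝ) : ℂ) ^ 2 - ((Real.sin (2 * t) : ℝ) : ℂ) ^ 2 := by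
  have : 4 * t = 2 * (2 * t) := by ring
  rw [this, Real.cos_two_mul']
  push_cast; ring

lemma sin4 (t : ℝ) : ((Real.sin (4 * t) : ℝ) : ℂ) =
    2 * ((Real.sin (2 * t) : ℝ) : ℂ) * ((Real.cos (2 * t) : ℝ) : ℂ) := by
  have : 4 * t = 2 * (2 * t) := by ring
  rw [this, Real.sin_two_mul]
  push_cast; ring

lemma conj_e1 (z : ℂ) : cylF z 1 * e1 * (cylF z 1)⁻¹ = e1 := by
  rw [cylF_one_inv, cylF_one]
  have h := cs_sq (2 * z.im)
  generalize ((Real.cos (2 * z.im) : ℝ) : ℂ) = c at *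
  generalize ((Real.sin (2 * z.im) : ℝ) : ℂ) = s at *
  have hI := Complex.I_sq
  ext i j; fin_cases i <;> fin_cases j <;> simp [e1, Matrix.mul_apply, Fin.sum_univ_two] <;>
    grind

lemma conj_e2 (z : ℂ) : cylF z 1 * e2 * (cylF z 1)⁻¹ =
    ((Real.cos (4 * z.im) : ℝ) : ℂ) • e2 + ((-Real.sin (4 * z.im) : ℝ) : ℂ) • e3 := by
  rw [cylF_one_inv, cylF_one, Complex.ofReal_neg, cos4, sin4]
  have h := cs_sq (2 * z.im)
  generalize ((Real.cos (2 * z.im) : ℝ) : ℂ) = c at *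
  generalize ((Real.sin (2 * z.im) : ℝ) : ℂ) = s at *
  have hI := Complex.I_sq
  ext i j; fin_cases i <;> fin_cases j <;> simp [e2, e3, Matrix.mul_apply, Fin.sum_univ_two] <;>
    grind

lemma conj_e3 (z : ℂ) : cylF z 1 * e3 * (cylF z 1)⁻¹ =
    ((Real.sin (4 * z.im) : ℝ) : ℂ) • e2 + ((Real.cos (4 * z.im) : ℝ) : ℂ) • e3 := by
  rw [cylF_one_inv, cylF_one, cos4, sin4]
  have h := cs_sq (2 * z.im)
  generalize ((Real.cos (2 * z.im) : ℝ) : ℂ) = c at *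
  generalize ((Real.sin (2 * z.im) : ℝ) : ℂ) = s at *
  have hI := Complex.I_sq
  ext i j; fin_cases i <;> fin_cases j <;> simp [e2, e3, Matrix.mul_apply, Fin.sum_univ_two] <;>
    grind

lemma symB_eq (H : ℝ) (z : ℂ) : symB H (cylF z) 1 = (-(2 * (H : ℂ))⁻¹) •
      (((4 * z.re : ℝ) : ℂ) • e1 + ((Real.sin (4 * z.im) : ℝ) : ℂ) • e2 +
        ((Real.cos (4 * z.im) : ℝ) : ℂ) • e3) := by
  have h : (2 * Complex.I * 1) • (((-2 * z.re : ℝ) : ℂ) • cylA) = ((4 * z.re : ℝ) : ℂ) • e1 := by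
    ext i j; fin_cases i <;> fin_cases j <;> simp [e1, cylA] <;> ring
  rw [symB, conj_e3, cylF_deriv, h]
  congr 1
  abel

/-- Surfaces with coefficient functions of one real coordinate each. -/
def surf (a b c : ℝ → ℝ) (w : ℂ) : M2 :=
  ((a w.re : ℝ) : ℂ) • e1 + ((b w.im : ℝ) : ℂ) • e2 + ((c w.im : ℝ) : ℂ) • e3

lemma surf_su (a b c : ℝ → ℝ) (z : ℂ) :
    (surf a b c z)ᴴ = -surf a b c z ∧ (surf a b c z).trace = 0 := by
  rw [surf]
  generalize a z.re = p
  generalize b z.im = q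
  generalize c z.im = r
  constructor
  · ext i j; fin_cases i <;> fin_cases j <;> simp [e1, e2, e3] <;> ring
  · simp [e1, e2, e3, Matrix.trace_fin_two]

lemma surf_fderiv (a b c : ℝ → ℝ) (a' b' c' : ℝ) (z : ℂ) (ha : HasDerivAt a a' z.re)
    (hb : HasDerivAt b b' z.im) (hc : HasDerivAt c c' z.im) :
    px (surf a b c) z = (a' : ℂ) • e1 ∧
    py (surf a b c) z = (b' : ℂ) • e2 + (c' : ℂ) • e3 := by
  have hre : HasFDerivAt (fun w : ℂ => w.re) Complex.reCLM z := Complex.reCLM.hasFDerivAt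
  have him : HasFDerivAt (fun w : ℂ => w.im) Complex.imCLM z := Complex.imCLM.hasFDerivAt
  have h1 : HasFDerivAt (fun w : ℂ => ((a w.re : ℝ) : ℂ)) _ z :=
    Complex.ofRealCLM.hasFDerivAt.comp z (ha.comp_hasFDerivAt z hre)
  have h2 : HasFDerivAt (fun w : ℂ => ((b w.im : ℝ) : ℂ)) _ z :=
    Complex.ofRealCLM.hasFDerivAt.comp z (hb.comp_hasFDerivAt z him)
  have h3 : HasFDerivAt (fun w : ℂ => ((c w.im : ℝ) : ℂ)) _ z :=
    Complex.ofRealCLM.hasFDerivAt.comp z (hc.comp_hasFDerivAt z him)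
  have h : HasFDerivAt (surf a b c) _ z :=
    ((h1.smul_const e1).add (h2.smul_const e2)).add (h3.smul_const e3)
  constructor
  · rw [px, h.fderiv]
    change ((a' * (1 : ℂ).re : ℝ) : ℂ) • e1 + ((b' * (1 : ℂ).im : ℝ) : ℂ) • e2 +
      ((c' * (1 : ℂ).im : ℝ) : ℂ) • e3 = _
    simp
  · rw [py, h.fderiv]
    change ((a' * Complex.I.re : ℝ) : ℂ) • e1 + ((b' * Complex.I.im : ℝ) : ℂ) • e2 +
      ((c' * Complex.I.im : ℝ) : ℂ) • e3 = _
    simp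

lemma surf_contDiff (a b c : ℝ → ℝ) (ha : ContDiff ℝ (⊤ : ℕ∞) a) (hb : ContDiff ℝ (⊤ : ℕ∞) b)
    (hc : ContDiff ℝ (⊤ : ℕ∞) c) : ContDiff ℝ (⊤ : ℕ∞) (surf a b c) := by
  have h1 : ContDiff ℝ (⊤ : ℕ∞) (fun w : ℂ => ((a w.re : ℝ) : ℂ)) :=
    Complex.ofRealCLM.contDiff.comp (ha.comp Complex.reCLM.contDiff)
  have h2 : ContDiff ℝ (⊤ : ℕ∞) (fun w : ℂ => ((b w.im : ℝ) : ℂ)) :=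
    Complex.ofRealCLM.contDiff.comp (hb.comp Complex.imCLM.contDiff)
  have h3 : ContDiff ℝ (⊤ : ℕ∞) (fun w : ℂ => ((c w.im : ℝ) : ℂ)) :=
    Complex.ofRealCLM.contDiff.comp (hc.comp Complex.imCLM.contDiff)
  exact ((h1.smul contDiff_const).add (h2.smul contDiff_const)).add (h3.smul contDiff_const)

lemma symB_surf (H : ℝ) : (fun w => symB H (cylF w) 1) =
    surf (fun x => -(2 * H)⁻¹ * (4 * x)) (fun y => -(2 * H)⁻¹ * Real.sin (4 * y))
      (fun y => -(2 * H)⁻¹ * Real.cos (4 * y)) := by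
  funext w
  rw [symB_eq, surf]
  simp only [smul_add, smul_smul]
  push_cast
  rfl

lemma hd_lin (k t : ℝ) : HasDerivAt (fun x : ℝ => k * (4 * x)) (k * 4) t := by
  simpa using ((hasDerivAt_id t).const_mul 4).const_mul k

lemma hd_sin (k t : ℝ) :
    HasDerivAt (fun x : ℝ => k * Real.sin (4 * x)) (k * 4 * Real.cos (4 * t)) t := by
  have h := (((hasDerivAt_id t).const_mul 4).sin).const_mul k
  have e : k * (Real.cos (4 * id t) * (4 * 1)) = k * 4 * Real.cos (4 * t) := by
    simp only [id]; ring
  rw [e] at h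
  exact h

lemma hd_cos (k t : ℝ) :
    HasDerivAt (fun x : ℝ => k * Real.cos (4 * x)) (-k * 4 * Real.sin (4 * t)) t := by
  have h := (((hasDerivAt_id t).const_mul 4).cos).const_mul k
  have e : k * (-Real.sin (4 * id t) * (4 * 1)) = -k * 4 * Real.sin (4 * t) := by
    simp only [id]; ring
  rw [e] at h
  exact h

lemma px_symB (H : ℝ) (z : ℂ) : px (fun w => symB H (cylF w) 1) z =
    ((-(2 * H)⁻¹ * 4 : ℝ) : ℂ) • e1 := by
  rw [symB_surf]
  exact (surf_fderiv _ _ _ _ _ _ z (hd_lin _ _) (hd_sin _ _) (hd_cos _ _)).1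

lemma py_symB (H : ℝ) (z : ℂ) : py (fun w => symB H (cylF w) 1) z =
    ((-(2 * H)⁻¹ * 4 * Real.cos (4 * z.im) : ℝ) : ℂ) • e2 +
    ((-(-(2 * H)⁻¹) * 4 * Real.sin (4 * z.im) : ℝ) : ℂ) • e3 := by
  rw [symB_surf]
  exact (surf_fderiv _ _ _ _ _ _ z (hd_lin _ _) (hd_sin _ _) (hd_cos _ _)).2

lemma pxx_symB (H : ℝ) (z : ℂ) : px (px (fun w => symB H (cylF w) 1)) z = 0 := by
  have : px (fun w => symB H (cylF w) 1) = fun _ => ((-(2 * H)⁻¹ * 4 : ℝ) : ℂ) • e1 := by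
    funext w; exact px_symB H w
  rw [this, px]; simp

lemma pyy_symB (H : ℝ) (z : ℂ) : py (py (fun w => symB H (cylF w) 1)) z =
    ((-(-(2 * H)⁻¹ * 4) * 4 * Real.sin (4 * z.im) : ℝ) : ℂ) • e2 +
    ((-(-(2 * H)⁻¹) * 4 * 4 * Real.cos (4 * z.im) : ℝ) : ℂ) • e3 := by
  have : py (fun w => symB H (cylF w) 1) = surf (fun _ => 0)
      (fun y => -(2 * H)⁻¹ * 4 * Real.cos (4 * y))
      (fun y => -(-(2 * H)⁻¹) * 4 * Real.sin (4 * y)) := by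
    funext w; rw [py_symB, surf]; simp
  rw [this]
  exact (surf_fderiv _ _ _ _ _ _ z (hasDerivAt_const _ _) (hd_cos _ _) (hd_sin _ _)).2

lemma ip_e1 (a b : ℂ) : ip (a • e1) (b • e1) = a * b := by
  have hI := Complex.I_sq
  simp [ip, e1, Matrix.trace_fin_two]
  grind

lemma ip_e1_e23 (a b c : ℂ) : ip (a • e1) (b • e2 + c • e3) = 0 := by
  simp [ip, e1, e2, e3, Matrix.trace_fin_two]

lemma ip_e23 (a b c d : ℂ) : ip (a • e2 + b • e3) (c • e2 + d • e3) = a * c + b * d := by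
  have hI := Complex.I_sq
  simp [ip, e2, e3, Matrix.trace_fin_two]
  grind

lemma cylF_su (z l : ℂ) (hl : ‖l‖ = 1) : (cylF z l)ᴴ * cylF z l = 1 ∧ (cylF z l).det = 1 := by
  have hc := conj_arg z l hl
  rw [cylF, exp_cylA]
  generalize z * l⁻¹ - (starRingEnd ℂ) z * l = c at *
  have h := Complex.cosh_sq_sub_sinh_sq c
  have h1 : (starRingEnd ℂ) (Complex.cosh c) = Complex.cosh c := by
    rw [← Complex.cosh_conj, hc, Complex.cosh_neg]
  have h2 : (starRingEnd ℂ) (Complex.sinh c) = -Complex.sinh c := by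
    rw [← Complex.sinh_conj, hc, Complex.sinh_neg]
  constructor
  · ext i j; fin_cases i <;> fin_cases j <;>
      simp [Matrix.mul_apply, Fin.sum_univ_two, h1, h2] <;>
      first | linear_combination h | ring
  · rw [Matrix.det_fin_two_of]; linear_combination h

lemma e3_su : e3ᴴ * e3 = 1 ∧ e3.det = 1 := by
  constructor
  · ext i j; fin_cases i <;> fin_cases j <;> simp [e3, Matrix.mul_apply, Fin.sum_univ_two]
  · simp [e3, Matrix.det_fin_two_of]

lemma e3_inv : e3⁻¹ = -e3 := by
  apply Matrix.inv_eq_right_inv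
  ext i j; fin_cases i <;> fin_cases j <;> simp [e3, Matrix.mul_apply, Fin.sum_univ_two]

lemma e3_conj1 : e3 * e1 * e3⁻¹ = -e1 := by
  rw [e3_inv]
  ext i j; fin_cases i <;> fin_cases j <;> simp [e3, e1, Matrix.mul_apply, Fin.sum_univ_two]

lemma e3_conj2 : e3 * e2 * e3⁻¹ = -e2 := by
  rw [e3_inv]
  ext i j; fin_cases i <;> fin_cases j <;> simp [e3, e2, Matrix.mul_apply, Fin.sum_univ_two]

lemma e3_conj3 : e3 * e3 * e3⁻¹ = e3 := by
  rw [e3_inv]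
  ext i j; fin_cases i <;> fin_cases j <;> simp [e3, Matrix.mul_apply, Fin.sum_univ_two]

lemma cylF_one_smooth : ContDiff ℝ (⊤ : ℕ∞) (fun z => cylF z 1) := by
  have h : (fun z => cylF z 1) = fun z : ℂ =>
      ((Real.cos (2 * z.im) : ℝ) : ℂ) • (1 : M2) +
      ((Real.sin (2 * z.im) : ℝ) : ℂ) • (Complex.I • cylA) := by
    funext z
    rw [cylF_one]
    ext i j; fin_cases i <;> fin_cases j <;> simp [cylA]
  have hy : ContDiff ℝ (⊤ : ℕ∞) (fun z : ℂ => 2 * z.im) :=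
    contDiff_const.mul Complex.imCLM.contDiff
  have h2 : ContDiff ℝ (⊤ : ℕ∞) (fun z : ℂ => ((Real.cos (2 * z.im) : ℝ) : ℂ)) :=
    Complex.ofRealCLM.contDiff.comp (Real.contDiff_cos.comp hy)
  have h3 : ContDiff ℝ (⊤ : ℕ∞) (fun z : ℂ => ((Real.sin (2 * z.im) : ℝ) : ℂ)) :=
    Complex.ofRealCLM.contDiff.comp (Real.contDiff_sin.comp hy)
  rw [h]
  exact (h2.smul contDiff_const).add (h3.smul contDiff_const)

/-- The adapted frame exists, for either sign of `H`. -/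
lemma frame_exists (H : ℝ) (hH : H ≠ 0) : ∃ F : ℂ → M2, ContDiff ℝ (⊤ : ℕ∞) F ∧
    ∀ z : ℂ, (F z)ᴴ * F z = 1 ∧ (F z).det = 1 ∧
      F z * e1 * (F z)⁻¹ = ((-(H / |H|) : ℝ) : ℂ) • e1 ∧
      F z * e2 * (F z)⁻¹ = ((-(H / |H|) : ℝ) : ℂ) •
        (((Real.cos (4 * z.im) : ℝ) : ℂ) • e2 + ((-Real.sin (4 * z.im) : ℝ) : ℂ) • e3) ∧
      F z * e3 * (F z)⁻¹ = 
        ((Real.sin (4 * z.im) : ℝ) : ℂ) • e2 + ((Real.cos (4 * z.im) : ℝ) : ℂ) • e3 := by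
  rcases lt_or_gt_of_ne hH with h | h
  · have hs : -(H / |H|) = 1 := by rw [abs_of_neg h]; field_simp
    refine ⟨fun z => cylF z 1, cylF_one_smooth, fun z => ?_⟩
    obtain ⟨h1, h2⟩ := cylF_su z 1 (by simp)
    refine ⟨h1, h2, ?_, ?_, conj_e3 z⟩
    · rw [hs, conj_e1]; simp
    · rw [hs, conj_e2]; simp
  · have hs : -(H / |H|) = -1 := by rw [abs_of_pos h]; field_simp
    refine ⟨fun z => cylF z 1 * e3, ?_, fun z => ?_⟩
    · exact cylF_one_smooth.mul contDiff_const
    obtain ⟨h1, h2⟩ := cylF_su z 1 (by simp)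
    have key : ∀ X : M2, cylF z 1 * e3 * X * (cylF z 1 * e3)⁻¹ =
        cylF z 1 * (e3 * X * e3⁻¹) * (cylF z 1)⁻¹ := by
      intro X
      rw [Matrix.mul_inv_rev]; simp only [mul_assoc]
    refine ⟨?_, ?_, ?_, ?_, ?_⟩
    · calc (cylF z 1 * e3)ᴴ * (cylF z 1 * e3) = e3ᴴ * ((cylF z 1)ᴴ * cylF z 1) * e3 := by
            rw [Matrix.conjTranspose_mul]; simp only [mul_assoc]
        _ = 1 := by rw [h1, mul_one]; exact e3_su.1
    · rw [Matrix.det_mul, h2, e3_su.2, one_mul]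
    · rw [key, e3_conj1, mul_neg, neg_mul, conj_e1, hs]; simp
    · rw [key, e3_conj2, mul_neg, neg_mul, conj_e2, hs]; simp [add_comm]
    · rw [key, e3_conj3, conj_e3]

/-- explicit Iwasawa factorization and Sym–Bobenko formula for the
cylinder: `exp(zλ⁻¹A) = F̂ B̂` on the unit circle, `F̂ ∈ SU(2)`, `B̂` is entire in `λ`
with `B̂(z,0) = I`, and `S₁(F̂(z,·)) = -(1/(2H))(4x e₁ + sin(4y) e₂ + cos(4y) e₃)`,
a conformally immersed round cylinder of constant mean curvature `H`. -/
theorem cylinder_example (H : ℝ) (hH : H ≠ 0) :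
    (∀ z l : ℂ, ‖l‖ = 1 →
      NormedSpace.exp ((z * l⁻¹) • cylA) = cylF z l * cylB z l) ∧
    (∀ z l : ℂ, ‖l‖ = 1 → (cylF z l)ᴴ * cylF z l = 1 ∧ (cylF z l).det = 1) ∧
    (∀ z : ℂ, Differentiable ℂ (fun l => cylB z l) ∧ cylB z 0 = 1) ∧
    (∀ z : ℂ, symB H (cylF z) 1 = (-(2 * (H : ℂ))⁻¹) •
      (((4 * z.re : ℝ) : ℂ) • e1 + ((Real.sin (4 * z.im) : ℝ) : ℂ) • e2 +
        ((Real.cos (4 * z.im) : ℝ) : ℂ) • e3)) ∧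
    (ContDiff ℝ (⊤ : ℕ∞) (fun z : ℂ => symB H (cylF z) 1) ∧
      (∀ z : ℂ, ((symB H (cylF z) 1)ᴴ = -(symB H (cylF z) 1) ∧
        (symB H (cylF z) 1).trace = 0)) ∧
      ∃ u : ℂ → ℝ, ContDiff ℝ (⊤ : ℕ∞) u ∧
        (∀ z : ℂ,
          ip (px (fun w => symB H (cylF w) 1) z) (px (fun w => symB H (cylF w) 1) z)
            = ((4 * Real.exp (2 * u z) : ℝ) : ℂ) ∧
          ip (py (fun w => symB H (cylF w) 1) z) (py (fun w => symB H (cylF w) 1) z)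
            = ((4 * Real.exp (2 * u z) : ℝ) : ℂ) ∧
          ip (px (fun w => symB H (cylF w) 1) z) (py (fun w => symB H (cylF w) 1) z) = 0) ∧
        ∃ F : ℂ → M2, ContDiff ℝ (⊤ : ℕ∞) F ∧
          ∀ z : ℂ, (F z)ᴴ * F z = 1 ∧ (F z).det = 1 ∧
            F z * e1 * (F z)⁻¹
              = (((2 * Real.exp (u z))⁻¹ : ℝ) : ℂ) • px (fun w => symB H (cylF w) 1) z ∧
            F z * e2 * (F z)⁻¹
              = (((2 * Real.exp (u z))⁻¹ : ℝ) : ℂ) • py (fun w => symB H (cylF w) 1) z ∧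
            ip (px (px (fun w => symB H (cylF w) 1)) z +
                py (py (fun w => symB H (cylF w) 1)) z) (F z * e3 * (F z)⁻¹)
              = ((8 * Real.exp (2 * u z) * H : ℝ) : ℂ)) := by
  have hexp : Real.exp (-Real.log |H|) = |H|⁻¹ := by
    rw [Real.exp_neg, Real.exp_log (abs_pos.mpr hH)]
  have hexp2 : Real.exp (2 * -Real.log |H|) = (H ^ 2)⁻¹ := by
    rw [two_mul, Real.exp_add, hexp, ← mul_inv, ← sq, sq_abs]
  have hcs : ∀ t : ℝ, Real.cos t ^ 2 + Real.sin t ^ 2 = 1 := Real.cos_sq_add_sin_sq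
  refine ⟨?_, cylF_su, ?_, symB_eq H, ?_, ?_, fun _ => -Real.log |H|, contDiff_const, ?_, ?_⟩
  · intro z l _
    rw [cylF, cylB, ← Matrix.exp_add_of_commute, ← add_smul, sub_add_cancel]
    exact ((Commute.refl cylA).smul_left _).smul_right _
  · intro z
    constructor
    · have h : (fun l => cylB z l) = fun l =>
          Complex.cosh ((starRingEnd ℂ) z * l) • (1 : M2) +
          Complex.sinh ((starRingEnd ℂ) z * l) • cylA := by
        funext l
        rw [cylB, exp_cylA]
        ext i j; fin_cases i <;> fin_cases j <;> simp [cylA]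
      rw [h]
      have hl : Differentiable ℂ (fun l : ℂ => (starRingEnd ℂ) z * l) :=
        differentiable_id.const_mul _
      exact (hl.ccosh.smul_const _).add (hl.csinh.smul_const _)
    · rw [cylB, mul_zero, zero_smul, NormedSpace.exp_zero]
  · rw [symB_surf]
    have h4 : ContDiff ℝ (⊤ : ℕ∞) (fun x : ℝ => 4 * x) := contDiff_const.mul contDiff_id
    exact surf_contDiff _ _ _ (contDiff_const.mul h4)
      (contDiff_const.mul (Real.contDiff_sin.comp h4))
      (contDiff_const.mul (Real.contDiff_cos.comp h4))
  · intro z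
    have h := congrFun (symB_surf H) z
    rw [h]
    exact surf_su _ _ _ z
  · intro z
    rw [px_symB, py_symB, ip_e1, ip_e23, ip_e1_e23, hexp2]
    refine ⟨?_, ?_, rfl⟩
    · rw [← Complex.ofReal_mul]; congr 1; field_simp; norm_num
    · rw [← Complex.ofReal_mul, ← Complex.ofReal_mul, ← Complex.ofReal_add]; congr 1
      have := hcs (4 * z.im)
      field_simp
      linear_combination 4 * this
  · obtain ⟨F, hF, hF2⟩ := frame_exists H hH
    refine ⟨F, hF, fun z => ?_⟩
    obtain ⟨h1, h2, h3, h4, h5⟩ := hF2 z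
    have hk : (2 * |H|⁻¹)⁻¹ * (-(2 * H)⁻¹ * 4) = -(H / |H|) := by
      have := abs_pos.mpr hH
      have h' := sq_abs H
      field_simp
      linarith
    refine ⟨h1, h2, ?_, ?_, ?_⟩
    · rw [h3, px_symB, hexp, smul_smul, ← Complex.ofReal_mul, hk]
    · rw [h4, py_symB, hexp, ← hk]
      simp only [smul_add, smul_smul, ← Complex.ofReal_mul]
      congr 3 <;> push_cast <;> ring
    · rw [h5, pxx_symB, zero_add, pyy_symB, ip_e23, hexp2,
        ← Complex.ofReal_mul, ← Complex.ofReal_mul, ← Complex.ofReal_add]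
      congr 1
      have := hcs (4 * z.im)
      field_simp
      linear_combination 16 * this
end
end

section
/- (Björling data determine the frame coefficients along a curve.) Let Σ ⊆ ℂ be open, f : Σ → su(2) a smooth conformal immersion with conformal factor e^u, F : Σ → SU(2) a smooth frame with F e₁ F⁻¹ = f_x/|f_x| and F e₂ F⁻¹ = f_y/|f_y|, N = F e₃ F⁻¹, Q = ⟨N,f_{zz}⟩, and H = (1/8)e^{-2u}⟨f_{xx}+f_{yy},N⟩. Write F⁻¹ ∂_x F = [[a,b],[-b̄,-a]]. Then at every point of Σ: (i) a is purely imaginary and u_z = a + (1/2)u_x; and (ii) Q = -2e^u( b̄ + H e^u ). -/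
open Matrix Complex

noncomputable section

attribute [local instance] Matrix.linftyOpNormedAddCommGroup Matrix.linftyOpNormedSpace
  Matrix.linftyOpNormedRing Matrix.linftyOpNormedAlgebra

lemma frame_deriv (g F : ℂ → M2) (u : ℂ → ℝ) (e : M2) (z v : ℂ)
    (hg : DifferentiableAt ℝ g z) (hF : DifferentiableAt ℝ F z) (hu : DifferentiableAt ℝ u z)
    (hdet : IsUnit (F z).det)
    (h : (fun w => g w * F w) =ᶠ[nhds z] fun w => (2 * Real.exp (u w)) • (F w * e)) :
    fderiv ℝ g z v = (2 * Real.exp (u z)) •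
      (F z * ((fderiv ℝ u z v) • e + (F z)⁻¹ * fderiv ℝ F z v * e
        - e * ((F z)⁻¹ * fderiv ℝ F z v)) * (F z)⁻¹) := by
  have h1 := (hg.hasFDerivAt.mul' hF.hasFDerivAt)
  have h2 := ((hu.hasFDerivAt.exp).const_mul (2:ℝ)).smul (hF.hasFDerivAt.mul_const' e)
  have h3 := h1.unique (h2.congr_of_eventuallyEq h)
  have h4 := congrArg (fun L => L v) h3
  have h0 := h.self_of_nhds
  simp only [ContinuousLinearMap.add_apply, ContinuousLinearMap.smul_apply,
    ContinuousLinearMap.smulRight_apply, smul_eq_mul, MulOpposite.smul_eq_mul_unop,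
    MulOpposite.unop_op] at h4 h0
  have hi : F z * (F z)⁻¹ = 1 := Matrix.mul_nonsing_inv _ hdet
  have hg0 : g z = (2 * Real.exp (u z)) • (F z * e * (F z)⁻¹) := by
    calc g z = (g z * F z) * (F z)⁻¹ := by rw [mul_assoc, hi, mul_one]
      _ = _ := by rw [h0, smul_mul_assoc]
  have h5 : fderiv ℝ g z v * F z = (2 * Real.exp (u z)) • (fderiv ℝ F z v * e)
      + (2 * (Real.exp (u z) * fderiv ℝ u z v)) • (F z * e) - g z * fderiv ℝ F z v := by
    rw [eq_sub_iff_add_eq, add_comm]; exact h4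
  calc fderiv ℝ g z v = (fderiv ℝ g z v * F z) * (F z)⁻¹ := by rw [mul_assoc, hi, mul_one]
    _ = _ := by
      rw [h5, hg0]
      have h6 : F z * ((fderiv ℝ u z v) • e + (F z)⁻¹ * fderiv ℝ F z v * e
        - e * ((F z)⁻¹ * fderiv ℝ F z v)) = (fderiv ℝ u z v) • (F z * e)
          + fderiv ℝ F z v * e - F z * e * (F z)⁻¹ * fderiv ℝ F z v := by
        have : F z * ((F z)⁻¹ * fderiv ℝ F z v * e) = fderiv ℝ F z v * e := by
          rw [← mul_assoc, ← mul_assoc, hi, one_mul]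
        rw [mul_sub, mul_add, this, mul_smul_comm]
        simp only [mul_assoc]
      rw [h6]
      simp only [sub_mul, add_mul, smul_mul_assoc, smul_sub, smul_add, smul_smul]
      rw [mul_assoc 2]
      abel

lemma entry_fderiv (F : ℂ → M2) (z : ℂ) (hF : DifferentiableAt ℝ F z) (i j : Fin 2) :
    HasFDerivAt (fun w => F w i j)
      ((LinearMap.toContinuousLinearMap (Matrix.entryLinearMap ℝ ℂ i j : M2 →ₗ[ℝ] ℂ)).comp
        (fderiv ℝ F z)) z :=
  (LinearMap.toContinuousLinearMap
    (Matrix.entryLinearMap ℝ ℂ i j : M2 →ₗ[ℝ] ℂ)).hasFDerivAt.comp z hF.hasFDerivAt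

lemma su2_entries (M : M2) (h : Mᴴ * M = 1) (hd : M.det = 1) :
    M⁻¹ = Mᴴ ∧ M 1 1 = (starRingEnd ℂ) (M 0 0) ∧ M 1 0 = -(starRingEnd ℂ) (M 0 1) := by
  have h1 : M⁻¹ = Mᴴ := Matrix.inv_eq_left_inv h
  have h2 : M⁻¹ = M.adjugate := by rw [Matrix.inv_def, hd]; simp
  have h3 : M.adjugate = Mᴴ := h2.symm.trans h1
  rw [Matrix.adjugate_fin_two] at h3
  refine ⟨h1, ?_, ?_⟩
  · simpa using congrFun (congrFun h3 0) 0
  · have := congrFun (congrFun h3 1) 0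
    simp at this
    rw [← this]; simp

lemma su2_form (F : ℂ → M2) (z v : ℂ) (hF : DifferentiableAt ℝ F z)
    (h : ∀ᶠ w in nhds z, (F w)ᴴ * F w = 1 ∧ (F w).det = 1) :
    ((F z)⁻¹ * fderiv ℝ F z v) 1 1 = -((F z)⁻¹ * fderiv ℝ F z v) 0 0 ∧
    ((F z)⁻¹ * fderiv ℝ F z v) 1 0 = -(starRingEnd ℂ) (((F z)⁻¹ * fderiv ℝ F z v) 0 1) ∧
    (((F z)⁻¹ * fderiv ℝ F z v) 0 0).re = 0 := by
  have e00 := entry_fderiv F z hF 0 0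
  have e01 := entry_fderiv F z hF 0 1
  have e10 := entry_fderiv F z hF 1 0
  have e11 := entry_fderiv F z hF 1 1
  have conjd : ∀ {q : ℂ → ℂ} {L : ℂ →L[ℝ] ℂ}, HasFDerivAt q L z →
      HasFDerivAt (fun w => (starRingEnd ℂ) (q w)) ((Complex.conjCLE : ℂ →L[ℝ] ℂ).comp L) z :=
    fun {q L} hq => (Complex.conjCLE : ℂ →L[ℝ] ℂ).hasFDerivAt.comp z hq
  obtain ⟨hi, p11, p10⟩ := su2_entries _ h.self_of_nhds.1 h.self_of_nhds.2
  have d11 := congrArg (fun L => L v) (e11.unique ((conjd e00).congr_of_eventuallyEq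
    (h.mono fun w hw => (su2_entries _ hw.1 hw.2).2.1)))
  have d10 := congrArg (fun L => L v) (e10.unique ((conjd e01).neg.congr_of_eventuallyEq
    (h.mono fun w hw => (su2_entries _ hw.1 hw.2).2.2)))
  have dd := congrArg (fun L => L v) (((e00.mul e11).sub (e01.mul e10)).unique
    ((hasFDerivAt_const (1:ℂ) z).congr_of_eventuallyEq
    (h.mono fun w hw => by have := hw.2; rw [Matrix.det_fin_two] at this; exact this)))
  rw [hi]
  generalize hG : fderiv ℝ F z v = G at *
  simp [hG] at d11 d10 dd
  have key : ((F z)ᴴ * G) 1 1 = -((F z)ᴴ * G) 0 0 := by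
    simp [Matrix.mul_apply, Fin.sum_univ_two, p11, p10, d11, d10] at dd ⊢
    linear_combination dd
  have hc : ((F z)ᴴ * G) 1 1 = (starRingEnd ℂ) (((F z)ᴴ * G) 0 0) := by
    simp [Matrix.mul_apply, Fin.sum_univ_two, p11, p10, d11, d10]
    ring
  refine ⟨key, ?_, ?_⟩
  · simp [Matrix.mul_apply, Fin.sum_univ_two, p11, p10, d11, d10]
  · rw [key] at hc
    have := congrArg Complex.re hc
    simp only [Complex.neg_re, Complex.conj_re] at this
    linarith

lemma ip_conj_s16 (P X Y : M2) (hd : IsUnit P.det) :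
    ip (P * X * P⁻¹) (P * Y * P⁻¹) = ip X Y := by
  have hi : P⁻¹ * P = 1 := Matrix.nonsing_inv_mul _ hd
  unfold ip
  have : P * X * P⁻¹ * (P * Y * P⁻¹) = P * (X * Y) * P⁻¹ := by
    calc _ = P * X * (P⁻¹ * P) * Y * P⁻¹ := by simp only [mul_assoc]
      _ = _ := by rw [hi]; simp only [mul_assoc, mul_one, one_mul]
  rw [this, Matrix.trace_mul_comm, ← mul_assoc, hi, one_mul]

/-- Björling data determine the frame coefficients along a curve: writing
`F⁻¹ ∂_x F = [[a,b],[-b̄,-a]]`, the coefficient `a` is purely imaginary,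
`u_z = a + (1/2) u_x`, and `Q = -2 e^u (b̄ + H e^u)`. -/
theorem frame_coefficients_from_bjorling_data
    (S : Set ℂ) (hS : IsOpen S)
    (f : ℂ → M2) (u : ℂ → ℝ) (F : ℂ → M2)
    (hf : ContDiffOn ℝ (⊤ : ℕ∞) f S)
    (hu : ContDiffOn ℝ (⊤ : ℕ∞) u S)
    (hF : ContDiffOn ℝ (⊤ : ℕ∞) F S)
    (hsu2 : ∀ z ∈ S, (f z)ᴴ = -(f z) ∧ (f z).trace = 0)
    (hconf : ∀ z ∈ S,
      ip (px f z) (px f z) = ((4 * Real.exp (2 * u z) : ℝ) : ℂ) ∧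
      ip (py f z) (py f z) = ((4 * Real.exp (2 * u z) : ℝ) : ℂ) ∧
      ip (px f z) (py f z) = 0)
    (hFunit : ∀ z ∈ S, (F z)ᴴ * F z = 1 ∧ (F z).det = 1)
    (hFe1 : ∀ z ∈ S, F z * e1 * (F z)⁻¹ = (((2 * Real.exp (u z))⁻¹ : ℝ) : ℂ) • px f z)
    (hFe2 : ∀ z ∈ S, F z * e2 * (F z)⁻¹ = (((2 * Real.exp (u z))⁻¹ : ℝ) : ℂ) • py f z)
    (N : ℂ → M2) (hN : ∀ z, N z = F z * e3 * (F z)⁻¹)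
    (Q : ℂ → ℂ) (hQ : ∀ z, Q z = ip (N z) (dz (dz f) z))
    (H : ℂ → ℂ)
    (hH : ∀ z, H z = (((8 * Real.exp (2 * u z))⁻¹ : ℝ) : ℂ) *
      ip (px (px f) z + py (py f) z) (N z))
    (a b : ℂ → ℂ)
    (hA : ∀ z, a z = ((F z)⁻¹ * px F z) 0 0)
    (hB : ∀ z, b z = ((F z)⁻¹ * px F z) 0 1) :
    ∀ z ∈ S,
      ((F z)⁻¹ * px F z = !![a z, b z; -((starRingEnd ℂ) (b z)), -(a z)]) ∧
      (a z).re = 0 ∧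
      dzR u z = a z + (2:ℂ)⁻¹ * ((pxR u z : ℝ) : ℂ) ∧
      Q z = -2 * (Real.exp (u z) : ℂ) *
        ((starRingEnd ℂ) (b z) + H z * (Real.exp (u z) : ℂ)) := by
  intro z hz
  have hn : S ∈ nhds z := hS.mem_nhds hz
  have hfz : ContDiffAt ℝ (⊤ : ℕ∞) f z := hf.contDiffAt hn
  have hFz : DifferentiableAt ℝ F z := (hF.contDiffAt hn).differentiableAt (by simp)
  have huz : DifferentiableAt ℝ u z := (hu.contDiffAt hn).differentiableAt (by simp)
  have hdf : DifferentiableAt ℝ (fderiv ℝ f) z :=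
    (hfz.fderiv_right (m := 1) (by norm_cast)).differentiableAt (by simp)
  have hpx : HasFDerivAt (px f) _ z := hdf.hasFDerivAt.clm_apply (hasFDerivAt_const (1:ℂ) z)
  have hpy : HasFDerivAt (py f) _ z := hdf.hasFDerivAt.clm_apply (hasFDerivAt_const Complex.I z)
  have hsymm : py (px f) z = px (py f) z := by
    rw [py, hpx.fderiv, px, hpy.fderiv]
    have := (hfz.isSymmSndFDerivAt (by simp; norm_cast)) Complex.I 1
    change fderiv ℝ f z 0 + fderiv ℝ (fderiv ℝ f) z Complex.I 1
      = fderiv ℝ f z 0 + fderiv ℝ (fderiv ℝ f) z 1 Complex.I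
    exact congrArg (fun t => fderiv ℝ f z 0 + t) this
  have hdet : ∀ w ∈ S, IsUnit (F w).det := fun w hw => by rw [(hFunit w hw).2]; exact isUnit_one
  have hev : ∀ (p : ℂ → M2) (e : M2), (∀ w ∈ S, F w * e * (F w)⁻¹
      = (((2 * Real.exp (u w))⁻¹ : ℝ) : ℂ) • p w) →
      (fun w => p w * F w) =ᶠ[nhds z] fun w => (2 * Real.exp (u w)) • (F w * e) := by
    intro p e hp
    filter_upwards [hn] with w hw
    have h1 : (F w)⁻¹ * F w = 1 := Matrix.nonsing_inv_mul _ (hdet w hw)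
    have h2 : F w * e = (2 * Real.exp (u w))⁻¹ • (p w * F w) := by
      calc F w * e = (F w * e * (F w)⁻¹) * F w := by rw [mul_assoc _ _ (F w), h1, mul_one]
        _ = _ := by rw [hp w hw, Complex.coe_smul, smul_mul_assoc]
    rw [h2, smul_smul, mul_inv_cancel₀ (by positivity), one_smul]
  have K1 := fun v => frame_deriv (px f) F u e1 z v hpx.differentiableAt hFz huz (hdet z hz)
    (hev _ _ hFe1)
  have K2 := fun v => frame_deriv (py f) F u e2 z v hpy.differentiableAt hFz huz (hdet z hz)
    (hev _ _ hFe2)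
  obtain ⟨s11, s10, s00⟩ := su2_form F z 1 hFz (Filter.eventually_of_mem hn hFunit)
  have hAz := hA z
  have hBz := hB z
  unfold px at hAz hBz
  rw [← hAz] at s11 s00
  rw [← hBz] at s10
  have hform : (F z)⁻¹ * fderiv ℝ F z 1
      = !![a z, b z; -((starRingEnd ℂ) (b z)), -(a z)] := by
    ext i j
    fin_cases i <;> fin_cases j
    · exact hAz.symm
    · exact hBz.symm
    · exact s10
    · exact s11
  have hexp : (2 * Real.exp (u z)) ≠ 0 := by positivity
  have hi : (F z)⁻¹ * F z = 1 := Matrix.nonsing_inv_mul _ (hdet z hz)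
  -- the identities for the second derivatives
  have kxx := K1 1
  have kxy := K1 Complex.I
  have kyx := K2 1
  rw [hform] at kxx kyx
  have hcompat := hsymm
  unfold px py at hcompat
  change fderiv ℝ (px f) z Complex.I = fderiv ℝ (py f) z 1 at hcompat
  rw [kxy, kyx] at hcompat
  have hcan : ∀ X Y : M2, (2 * Real.exp (u z)) • (F z * X * (F z)⁻¹)
      = (2 * Real.exp (u z)) • (F z * Y * (F z)⁻¹) → X = Y := by
    intro X Y hXY
    have h1 := smul_right_injective M2 hexp hXY
    have h2 := congrArg (fun M => (F z)⁻¹ * M * F z) h1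
    have h3 : ∀ X : M2, (F z)⁻¹ * (F z * X * (F z)⁻¹) * F z = X := fun X => by
      calc _ = ((F z)⁻¹ * F z) * X * ((F z)⁻¹ * F z) := by simp only [mul_assoc]
        _ = X := by rw [hi, one_mul, mul_one]
    simpa only [h3] using h2
  have hc := hcan _ _ hcompat
  have hc01 := congrFun (congrFun hc 0) 1
  have hc10 := congrFun (congrFun hc 1) 0
  generalize (F z)⁻¹ * fderiv ℝ F z Complex.I = B at hc01 hc10
  simp [e1, e2, Matrix.mul_apply, Fin.sum_univ_two, Matrix.vecMul, dotProduct] at hc01 hc10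
  have huy : (pyR u z : ℂ) = 2 * Complex.I * a z := by
    unfold pyR
    linear_combination (Complex.I / 2) * (hc01 + hc10)
      + (fderiv ℝ u z Complex.I : ℂ) * Complex.I_sq
  refine ⟨hform, s00, ?_, ?_⟩
  · unfold dzR
    rw [huy]
    linear_combination (-a z) * Complex.I_sq
  · have ipadd : ∀ X Y Z : M2, ip (X + Y) Z = ip X Z + ip Y Z := fun X Y Z => by
      simp [ip, add_mul, mul_add]
    have ipcomm : ∀ X Y : M2, ip X Y = ip Y X := fun X Y => by
      simp only [ip, Matrix.trace_mul_comm X Y]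
    have ipsmul : ∀ (c : ℂ) (X Y : M2), ip (c • X) Y = c * ip X Y := fun c X Y => by
      simp [ip]; ring
    have vxx : ip (px (px f) z) (N z) = 2 * Real.exp (u z) *
        (-(b z) - (starRingEnd ℂ) (b z)) := by
      rw [px, kxx, hN z, ← Complex.coe_smul, ipsmul, ip_conj_s16 _ _ _ (hdet z hz)]
      simp [ip, e1, e3, Matrix.trace_fin_two, Matrix.mul_apply, Fin.sum_univ_two]
      ring_nf
      simp
      try ring
    have vyx : ip (px (py f) z) (N z) = 2 * Real.exp (u z) *
        (Complex.I * (b z - (starRingEnd ℂ) (b z))) := by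
      rw [px, kyx, hN z, ← Complex.coe_smul, ipsmul, ip_conj_s16 _ _ _ (hdet z hz)]
      simp [ip, e2, e3, Matrix.trace_fin_two, Matrix.mul_apply, Fin.sum_univ_two]
      ring_nf
    have hdzf : HasFDerivAt (dz f) _ z :=
      (hpx.differentiableAt.hasFDerivAt.sub
        (hpy.differentiableAt.hasFDerivAt.const_smul Complex.I)).const_smul (2:ℂ)⁻¹
    have hzz : dz (dz f) z = (4:ℂ)⁻¹ • (px (px f) z + (-1:ℂ) • py (py f) z
        + (-2 * Complex.I) • px (py f) z) := by
      have q1 : px (dz f) z = (2:ℂ)⁻¹ • (px (px f) z - Complex.I • px (py f) z) := by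
        rw [px, hdzf.fderiv]; rfl
      have q2 : py (dz f) z = (2:ℂ)⁻¹ • (px (py f) z - Complex.I • py (py f) z) := by
        rw [← hsymm, py, hdzf.fderiv]; rfl
      rw [dz, q1, q2]
      ext i j
      simp
      linear_combination ((py (py f) z i j) / 4) * Complex.I_sq
    have hHz := hH z
    rw [ipadd, vxx] at hHz
    rw [hQ z, ipcomm, hzz, ipsmul, ipadd, ipadd, ipsmul, ipsmul, vxx, vyx, hHz]
    have h2 : Real.exp (2 * u z) = Real.exp (u z) ^ 2 := by rw [← Real.exp_nat_mul]; norm_num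
    rw [h2]
    have hne : (Real.exp (u z) : ℂ) ≠ 0 := by exact_mod_cast (Real.exp_pos _).ne'
    push_cast at hne ⊢
    field_simp
    ring_nf
    simp
    try ring
end
end
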